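/- arXiv:math/0311193 — 2 statements merged into one kernel-verified Lean document; each statement's English description precedes it below -/
import Mathlib

section
/- The skew product T admits a unique absolutely continuous (with respect to Leb) invariant Borel probability measure m. Moreover m is ergodic, and its density h = dm/dLeb has a version which is Lipschitz continuous on every compact subset of S¹ × (0,1]. -/
open MeasureTheory Real Filter Topology
open scoped NNReal ENNReal

noncomputable section

/-- The circle `S¹ = ℝ/ℤ`. -/
abbrev S1 : Type := UnitAddCircle

/-- The map `F(ω) = 4ω` on the circle. -/
noncomputable def Fm : S1 → S1 := fun ω => (4 : ℕ) • ω

/-- The one-dimensional maps `T_a(x) = x(1 + 2^a x^a) = x(1 + (2x)^a)` for `x ≤ 1/2`,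
`2x - 1` for `x > 1/2`. -/
noncomputable def Ta (a x : ℝ) : ℝ := if x ≤ 1 / 2 then x * (1 + (2 * x) ^ a) else 2 * x - 1

/-- The skew product `T(ω, x) = (F ω, T_{α(ω)}(x))`. -/
noncomputable def Tskew (α : S1 → ℝ) : S1 × ℝ → S1 × ℝ :=
  fun p => (Fm p.1, Ta (α p.1) p.2)

/-- The reference measure: Haar probability on `S¹` times Lebesgue measure on `[0,1]`. -/
noncomputable def Leb : Measure (S1 × ℝ) :=
  (volume : Measure S1).prod (volume.restrict (Set.Icc (0:ℝ) 1))

/-- left branch -/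
def lb (a y : ℝ) : ℝ := y * (1 + (2 * y) ^ a)

/-- derivative of the left branch -/
def DT (a y : ℝ) : ℝ := 1 + (1 + a) * (2 * y) ^ a

lemma lb_strictMono {a y z : ℝ} (ha : 0 < a) (hy : 0 ≤ y) (hyz : y < z) : lb a y < lb a z := by
  unfold lb
  have h1 : (2 * y) ^ a ≤ (2 * z) ^ a := Real.rpow_le_rpow (by linarith) (by linarith) ha.le
  have h2 : 0 ≤ (2 * y) ^ a := Real.rpow_nonneg (by linarith) _
  nlinarith

lemma lb_le_iff {a y z : ℝ} (ha : 0 < a) (hy : 0 ≤ y) (hz : 0 ≤ z) : lb a y ≤ lb a z ↔ y ≤ z := by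
  constructor
  · intro h
    by_contra h'
    push Not at h'
    exact absurd (lb_strictMono ha hz h') (not_lt.mpr h)
  · intro h
    rcases h.eq_or_lt with h | h
    · rw [h]
    · exact (lb_strictMono ha hy h).le

lemma lb_half {a : ℝ} : lb a (1 / 2) = 1 := by
  unfold lb; norm_num

lemma lb_zero {a : ℝ} : lb a 0 = 0 := by
  unfold lb; norm_num

lemma lb_cont {a : ℝ} (ha : 0 < a) : Continuous (lb a) := by
  unfold lb
  refine continuous_id.mul (continuous_const.add ?_)
  exact (continuous_const.mul continuous_id).rpow_const (fun x => Or.inr ha.le)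

lemma exists_lb {a x : ℝ} (ha : 0 < a) (hx : x ∈ Set.Ioc (0:ℝ) 1) :
    ∃ y ∈ Set.Ioc (0:ℝ) (1 / 2), lb a y = x := by
  have h := intermediate_value_Icc (by norm_num : (0:ℝ) ≤ 1 / 2) (lb_cont ha).continuousOn
  rw [lb_half, lb_zero] at h
  obtain ⟨y, hy, hyx⟩ := h ⟨hx.1.le, hx.2⟩
  refine ⟨y, ⟨lt_of_le_of_ne hy.1 ?_, hy.2⟩, hyx⟩
  rintro rfl
  rw [lb_zero] at hyx
  exact absurd hyx hx.1.ne

/-- left inverse branch -/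
def Sinv (a x : ℝ) : ℝ :=
  open Classical in if h : ∃ y ∈ Set.Ioc (0:ℝ) (1 / 2), lb a y = x then h.choose else 0

lemma Sinv_spec {a x : ℝ} (ha : 0 < a) (hx : x ∈ Set.Ioc (0:ℝ) 1) :
    0 < Sinv a x ∧ Sinv a x ≤ 1 / 2 ∧ lb a (Sinv a x) = x := by
  have h := exists_lb ha hx
  unfold Sinv
  rw [dif_pos h]
  exact ⟨h.choose_spec.1.1, h.choose_spec.1.2, h.choose_spec.2⟩

lemma lb_mem {a y : ℝ} (ha : 0 < a) (hy : y ∈ Set.Ioc (0:ℝ) (1 / 2)) : lb a y ∈ Set.Ioc (0:ℝ) 1 := by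
  constructor
  · rw [← lb_zero (a := a)]; exact lb_strictMono ha le_rfl hy.1
  · rw [← lb_half (a := a)]; exact (lb_le_iff ha hy.1.le (by norm_num)).2 hy.2

lemma Sinv_lb {a y : ℝ} (ha : 0 < a) (hy : y ∈ Set.Ioc (0:ℝ) (1 / 2)) : Sinv a (lb a y) = y := by
  obtain ⟨h1, h2, h3⟩ := Sinv_spec ha (lb_mem ha hy)
  exact le_antisymm ((lb_le_iff ha h1.le hy.1.le).1 h3.le) ((lb_le_iff ha hy.1.le h1.le).1 h3.ge)

lemma Sinv_mono {a x z : ℝ} (ha : 0 < a) (hx : x ∈ Set.Ioc (0:ℝ) 1) (hz : z ∈ Set.Ioc (0:ℝ) 1)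
    (h : x ≤ z) : Sinv a x ≤ Sinv a z := by
  obtain ⟨h1, h2, h3⟩ := Sinv_spec ha hx
  obtain ⟨h4, h5, h6⟩ := Sinv_spec ha hz
  rw [← lb_le_iff ha h1.le h4.le, h3, h6]; exact h

lemma DT_pos {a y : ℝ} (ha : 0 < a) (hy : 0 ≤ y) : 1 ≤ DT a y := by
  unfold DT
  have h2 : 0 ≤ (2 * y) ^ a := Real.rpow_nonneg (by linarith) _
  nlinarith

lemma DT_mono {a y z : ℝ} (ha : 0 < a) (hy : 0 ≤ y) (h : y ≤ z) : DT a y ≤ DT a z := by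
  unfold DT
  have h1 : (2 * y) ^ a ≤ (2 * z) ^ a := Real.rpow_le_rpow (by linarith) (by linarith) ha.le
  nlinarith

lemma lb_hasDerivAt {a y : ℝ} (hy : 0 < y) : HasDerivAt (lb a) (DT a y) y := by
  have h1 : HasDerivAt (fun y : ℝ => 2 * y) 2 y := by
    simpa using (hasDerivAt_id y).const_mul (2:ℝ)
  have h2 := h1.rpow_const (p := a) (Or.inl (by positivity))
  have h3 := (hasDerivAt_id y).mul (h2.const_add 1)
  refine h3.congr_deriv ?_
  unfold DT
  have h4 : (2 * y) ^ a = (2 * y) ^ (a - 1) * (2 * y) := by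
    rw [← Real.rpow_add_one (by positivity)]; ring_nf
  simp only [id]
  rw [h4]; ring

/-- monotonicity of the weight for the `x^(1+A)` condition -/
lemma weight_mono {a A ξ η : ℝ} (ha : 0 < a) (haA : a ≤ A) (h0 : 0 ≤ ξ) (h : ξ ≤ η) :
    (1 + ξ) ^ (1 + A) / (1 + (1 + a) * ξ) ≤ (1 + η) ^ (1 + A) / (1 + (1 + a) * η) := by
  have hd1 : 0 < 1 + (1 + a) * ξ := by nlinarith
  have hd2 : 0 < 1 + (1 + a) * η := by nlinarith
  have hp : 0 < (1 + ξ) ^ (1 + A) := Real.rpow_pos_of_pos (by linarith) _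
  rw [div_le_div_iff₀ hd1 hd2]
  have hr : (1 + η) = (1 + ξ) * (1 + (η - ξ) / (1 + ξ)) := by
    have : (1 + ξ) ≠ 0 := by linarith
    field_simp; ring
  have hq : 0 ≤ (η - ξ) / (1 + ξ) := div_nonneg (by linarith) (by linarith)
  rw [hr, Real.mul_rpow (by linarith) (by linarith), mul_assoc]
  refine mul_le_mul_of_nonneg_left ?_ hp.le
  have hb := one_add_mul_self_le_rpow_one_add (s := (η - ξ) / (1 + ξ)) (by linarith)
    (p := 1 + A) (by linarith)
  refine le_trans ?_ (mul_le_mul_of_nonneg_right hb hd1.le)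
  have e : η - ξ = (η - ξ) / (1 + ξ) * (1 + ξ) := by
    have : (1 + ξ) ≠ 0 := by linarith
    field_simp
  set q := (η - ξ) / (1 + ξ)
  have e2 : η = ξ + q * (1 + ξ) := by linarith
  rw [e2]
  nlinarith [mul_nonneg hq h0, mul_nonneg (mul_nonneg hq h0) ha.le, mul_nonneg hq (sub_nonneg.2 haA),
    mul_nonneg (mul_nonneg hq h0) (sub_nonneg.2 haA), mul_nonneg (mul_nonneg (mul_nonneg hq h0) (sub_nonneg.2 haA)) ha.le, mul_nonneg (mul_nonneg (mul_nonneg hq h0) ha.le) ha.le]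

/-- key estimate for the bound `x^(-A)` -/
lemma bound_key {a A y : ℝ} (ha : 0 < a) (haA : a ≤ A) (hA : A < 1) (hy : 0 < y) (hy2 : y ≤ 1 / 2) :
    y ^ (-A) / DT a y + (1 - A) / 3 ≤ (lb a y) ^ (-A) := by
  have hA0 : 0 < A := by linarith
  set ξ := (2 * y) ^ a with hξ
  have hξ0 : 0 < ξ := Real.rpow_pos_of_pos (by linarith) _
  have hξ1 : ξ ≤ 1 := Real.rpow_le_one (by linarith) (by linarith) ha.le
  have hD : DT a y = 1 + (1 + a) * ξ := rfl
  have hl : lb a y = y * (1 + ξ) := rfl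
  have hD1 : 1 ≤ DT a y := DT_pos ha hy.le
  -- multiply by (lb)^A
  have hlp : 0 < lb a y := by rw [hl]; positivity
  have hLA : 0 < (lb a y) ^ A := Real.rpow_pos_of_pos hlp _
  have h1 : (lb a y) ^ A ≤ ξ := by
    have : lb a y ≤ 2 * y := by rw [hl]; nlinarith
    calc (lb a y) ^ A ≤ (2 * y) ^ A := Real.rpow_le_rpow hlp.le this hA0.le
      _ ≤ (2 * y) ^ a := Real.rpow_le_rpow_of_exponent_ge (by linarith) (by linarith) haA
  have h2 : (1 + ξ) ^ A ≤ 1 + A * ξ :=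
    rpow_one_add_le_one_add_mul_self (by linarith) hA0.le hA.le
  have h3 : (lb a y) ^ A * y ^ (-A) = (1 + ξ) ^ A := by
    rw [hl, Real.mul_rpow hy.le (by linarith), Real.rpow_neg hy.le]
    have : y ^ A ≠ 0 := (Real.rpow_pos_of_pos hy _).ne'
    field_simp
  have h4 : (lb a y) ^ A * (lb a y) ^ (-A) = 1 := by
    rw [← Real.rpow_add hlp]; simp
  have goal : (lb a y) ^ A * (y ^ (-A) / DT a y + (1 - A) / 3) ≤ (lb a y) ^ A * (lb a y) ^ (-A) := by
    rw [h4, mul_add, ← mul_div_assoc, h3]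
    have h5 : (1 + ξ) ^ A / DT a y ≤ 1 - (1 - A) * ξ / 3 := by
      rw [div_le_iff₀ (by linarith), hD]
      refine h2.trans ?_
      have : 1 + (1 + a) * ξ ≤ 3 := by nlinarith
      have h6 : 0 ≤ (1 - A) * ξ := mul_nonneg (by linarith) hξ0.le
      nlinarith
    nlinarith
  exact le_of_mul_le_mul_left goal hLA

/-- comparison of inverse branches for different parameters -/
lemma Sinv_param {c a b x : ℝ} (hc : 0 < c) (hc1 : c ≤ 1) (hca : c ≤ a) (hab : a ≤ b) (hb : b < 1)
    (hx : x ∈ Set.Ioc (0:ℝ) 1) :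
    Sinv a x ≤ Sinv b x ∧ Sinv b x ≤ exp ((b - a) / c) * Sinv a x ∧
    DT b (Sinv b x) ≤ exp ((b - a) / c) * DT a (Sinv a x) ∧
    DT a (Sinv a x) ≤ exp (2 * (b - a) / c) * DT b (Sinv b x) := by
  have ha : 0 < a := by linarith
  have hb0 : 0 < b := by linarith
  obtain ⟨h1, h2, h3⟩ := Sinv_spec ha hx
  obtain ⟨h4, h5, h6⟩ := Sinv_spec hb0 hx
  set y := Sinv a x
  set z := Sinv b x
  have hyz : y ≤ z := by
    rw [← lb_le_iff hb0 h1.le h4.le, h6, ← h3]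
    unfold lb
    have : (2 * y) ^ b ≤ (2 * y) ^ a :=
      Real.rpow_le_rpow_of_exponent_ge (by linarith) (by linarith) hab
    nlinarith
  set ξ := (2 * y) ^ a with hξ
  set η := (2 * z) ^ b with hη
  have hξ0 : 0 < ξ := Real.rpow_pos_of_pos (by linarith) _
  have hη0 : 0 < η := Real.rpow_pos_of_pos (by linarith) _
  have e1 : y * (1 + ξ) = x := h3
  have e2 : z * (1 + η) = x := h6
  have hηξ : η ≤ ξ := by
    by_contra hh
    push Not at hh
    nlinarith
  have hδ : 0 ≤ b - a := by linarith
  -- ξ - η ≤ (b-a)/c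
  have hdiff : ξ - η ≤ (b - a) / c := by
    have i1 : (2 * y) ^ b ≤ η := Real.rpow_le_rpow (by linarith) (by linarith) hb0.le
    have i2 : (2 * y) ^ b = ξ * (2 * y) ^ (b - a) := by
      rw [hξ, ← Real.rpow_add (by linarith)]; ring_nf
    have i3 : 1 + (b - a) * log (2 * y) ≤ (2 * y) ^ (b - a) := by
      rw [Real.rpow_def_of_pos (by linarith)]
      have := Real.add_one_le_exp (log (2 * y) * (b - a))
      linarith
    have i4 : - (ξ * log (2 * y)) ≤ 1 / c := by
      have hl : log ξ = a * log (2 * y) := Real.log_rpow (by linarith) _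
      have hl2 : - log ξ ≤ 1 / ξ := by
        rw [← Real.log_inv]
        have := Real.log_le_sub_one_of_pos (inv_pos.2 hξ0)
        rw [one_div]; linarith
      have hl3 : - (ξ * log ξ) ≤ 1 := by
        have := mul_le_mul_of_nonneg_left hl2 hξ0.le
        rw [mul_one_div_cancel hξ0.ne'] at this
        linarith
      rw [hl] at hl3
      rw [le_div_iff₀ hc]
      have hlog : log (2 * y) ≤ 0 := Real.log_nonpos (by linarith) (by linarith)
      have hle : 0 ≤ - (ξ * log (2 * y)) := by nlinarith
      nlinarith
    have i5 : ξ * (1 + (b - a) * log (2 * y)) ≤ η := by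
      refine le_trans ?_ i1
      rw [i2]
      exact mul_le_mul_of_nonneg_left i3 hξ0.le
    have i6 := mul_le_mul_of_nonneg_left i4 hδ
    have : (b - a) * (1 / c) = (b - a) / c := by ring
    nlinarith
  set D := (b - a) / c with hD
  have hD0 : 0 ≤ D := by positivity
  have hexp : 1 + D ≤ exp D := by linarith [Real.add_one_le_exp D]
  have hbD : b - a ≤ D := by rw [hD, le_div_iff₀ hc]; nlinarith
  refine ⟨hyz, ?_, ?_, ?_⟩
  · refine le_trans ?_ (mul_le_mul_of_nonneg_right hexp h1.le)
    have : z * (1 + η) ≤ (1 + D) * y * (1 + η) := by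
      rw [e2, ← e1]
      nlinarith [mul_nonneg (mul_nonneg hD0 h1.le) hη0.le]
    exact le_of_mul_le_mul_right this (by linarith)
  · change 1 + (1 + b) * η ≤ _ * (1 + (1 + a) * ξ)
    refine le_trans ?_ (mul_le_mul_of_nonneg_right hexp (by nlinarith))
    have : (1 + b) * η ≤ (1 + b) * ξ := by nlinarith
    nlinarith [mul_nonneg (mul_nonneg hD0 hξ0.le) ha.le, mul_nonneg (sub_nonneg.2 hbD) hξ0.le]
  · change 1 + (1 + a) * ξ ≤ _ * (1 + (1 + b) * η)
    have hexp2 : 1 + 2 * D ≤ exp (2 * (b - a) / c) := by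
      have := Real.add_one_le_exp (2 * D)
      have e : 2 * (b - a) / c = 2 * D := by rw [hD]; ring
      rw [e]; linarith
    refine le_trans ?_ (mul_le_mul_of_nonneg_right hexp2 (by nlinarith))
    have : (1 + a) * ξ ≤ (1 + a) * η + (1 + a) * D := by nlinarith
    nlinarith [mul_nonneg hη0.le hδ, mul_nonneg (mul_nonneg hD0 hη0.le) hb0.le, mul_nonneg hD0 hη0.le]

/-- standing assumptions on `α` -/
structure AlphaHyp (α : S1 → ℝ) (c A Λ : ℝ) : Prop where
  c_pos : 0 < c
  lower : ∀ ω, c ≤ α ω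
  upper : ∀ ω, α ω ≤ A
  A_lt : A < 1
  Λ_nonneg : 0 ≤ Λ
  lip : ∀ s t : ℝ, |α (s : S1) - α (t : S1)| ≤ Λ * |s - t|

lemma AlphaHyp.pos {α c A Λ} (H : AlphaHyp α c A Λ) (ω) : 0 < α ω := H.c_pos.trans_le (H.lower ω)
lemma AlphaHyp.lt_one {α c A Λ} (H : AlphaHyp α c A Λ) (ω) : α ω < 1 := (H.upper ω).trans_lt H.A_lt
lemma AlphaHyp.A_pos {α c A Λ} (H : AlphaHyp α c A Λ) : 0 < A := (H.pos 0).trans_le (H.upper 0)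
lemma AlphaHyp.c_le {α c A Λ} (H : AlphaHyp α c A Λ) : c ≤ 1 := (H.lower 0).trans (H.lt_one 0).le

/-- the invariant cone of regular functions -/
structure Reg (A B : ℝ) (f : S1 → ℝ → ℝ) : Prop where
  supp : ∀ ω x, x ∉ Set.Ioc (0:ℝ) 1 → f ω x = 0
  nonneg : ∀ ω x, 0 ≤ f ω x
  anti : ∀ ω x y, 0 < x → x ≤ y → y ≤ 1 → f ω y ≤ f ω x
  mono : ∀ ω x y, 0 < x → x ≤ y → y ≤ 1 → x ^ (1 + A) * f ω x ≤ y ^ (1 + A) * f ω y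
  loglip : ∀ (s t : ℝ) x, f (s : S1) x ≤ exp (B * |s - t|) * f (t : S1) x

/-- the fibrewise transfer operator -/
def Pop (α : S1 → ℝ) (f : S1 → ℝ → ℝ) : S1 → ℝ → ℝ := fun ω x =>
  open Classical in
  if x ∈ Set.Ioc (0:ℝ) 1 then
    f ω (Sinv (α ω) x) / DT (α ω) (Sinv (α ω) x) + f ω ((x + 1) / 2) / 2
  else 0

/-- a representative in `ℝ` of a point of the circle -/
def lift (ω : S1) : ℝ := (AddCircle.equivIco 1 0 ω : ℝ)

lemma coe_lift (ω : S1) : ((lift ω : ℝ) : S1) = ω := AddCircle.coe_equivIco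

/-- the transfer operator of `ω ↦ 4 ω` -/
def Qop (g : S1 → ℝ → ℝ) : S1 → ℝ → ℝ := fun ω x =>
  (∑ k ∈ Finset.range 4, g (((lift ω + k) / 4 : ℝ) : S1) x) / 4

lemma sum_four_periodic {E : Type*} [AddCommMonoid E] (g : S1 → E) :
    Function.Periodic (fun t : ℝ => ∑ k ∈ Finset.range 4, g (((t + k) / 4 : ℝ) : S1)) 1 := by
  intro t
  simp only [Finset.sum_range_succ, Finset.sum_range_zero]
  have h : (((t + 1 + (3:ℕ)) / 4 : ℝ) : S1) = (((t + (0:ℕ)) / 4 : ℝ) : S1) := by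
    have : ((t + 1 + (3:ℕ)) / 4 : ℝ) = (t + (0:ℕ)) / 4 + 1 := by push_cast; ring
    rw [this, AddCircle.coe_add, AddCircle.coe_period, add_zero]
  rw [h]
  have e0 : (t + 1 + (0:ℕ) : ℝ) = t + (1:ℕ) := by push_cast; ring
  have e1 : (t + 1 + (1:ℕ) : ℝ) = t + (2:ℕ) := by push_cast; ring
  have e2 : (t + 1 + (2:ℕ) : ℝ) = t + (3:ℕ) := by push_cast; ring
  rw [e0, e1, e2]
  abel

lemma sum_four_lift {E : Type*} [AddCommMonoid E] (g : S1 → E) (t : ℝ) :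
    ∑ k ∈ Finset.range 4, g (((lift (t : S1) + k) / 4 : ℝ) : S1) =
    ∑ k ∈ Finset.range 4, g (((t + k) / 4 : ℝ) : S1) := by
  have h : ((lift (t : S1) : ℝ) : S1) = (t : S1) := coe_lift _
  rw [← sub_eq_zero, ← AddCircle.coe_sub, AddCircle.coe_eq_zero_iff] at h
  obtain ⟨n, hn⟩ := h
  have e : lift (t : S1) = t + n • (1:ℝ) := by rw [hn]; ring
  rw [e]
  exact (sum_four_periodic g).zsmul n t

lemma Qop_coe (g : S1 → ℝ → ℝ) (t x : ℝ) :
    Qop g (t : S1) x = (∑ k ∈ Finset.range 4, g (((t + k) / 4 : ℝ) : S1) x) / 4 := by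
  unfold Qop
  rw [sum_four_lift (fun ω => g ω x)]

lemma left_compare {A B c a b x : ℝ} {f} (hf : Reg A B f) (hc : 0 < c) (hca : c ≤ a) (hcb : c ≤ b)
    (haA : a ≤ A) (hbA : b ≤ A) (hA : A < 1) (hx : x ∈ Set.Ioc (0:ℝ) 1) (ω : S1) :
    f ω (Sinv a x) / DT a (Sinv a x) ≤
      exp (4 / c * |a - b|) * (f ω (Sinv b x) / DT b (Sinv b x)) := by
  have ha : 0 < a := by linarith
  have hb0 : 0 < b := by linarith
  obtain ⟨h1, h2, h3⟩ := Sinv_spec ha hx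
  obtain ⟨h4, h5, h6⟩ := Sinv_spec hb0 hx
  have D1 := DT_pos ha h1.le
  have D2 := DT_pos hb0 h4.le
  have key : f ω (Sinv a x) * DT b (Sinv b x) ≤
      exp (4 / c * |a - b|) * (f ω (Sinv b x) * DT a (Sinv a x)) := by
    rcases le_total a b with hab | hab
    · obtain ⟨g1, g2, g3, g4⟩ := Sinv_param hc (by linarith) hca hab (by linarith) hx
      set y := Sinv a x
      set z := Sinv b x
      set D := (b - a) / c with hD
      have hD0 : 0 ≤ D := div_nonneg (by linarith) hc.le
      have e : exp (4 / c * |a - b|) = exp (2 * D) * exp D * exp D := by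
        rw [← exp_add, ← exp_add, abs_of_nonpos (by linarith), hD]
        congr 1; field_simp; ring
      have hfyz : f ω y ≤ exp (2 * D) * f ω z := by
        have m := hf.mono ω y z h1 g1 (by linarith)
        have hz : z ^ (1 + A) ≤ exp (2 * D) * y ^ (1 + A) := by
          calc z ^ (1 + A) ≤ (exp D * y) ^ (1 + A) :=
                Real.rpow_le_rpow h4.le g2 (by linarith)
            _ = exp D ^ (1 + A) * y ^ (1 + A) := Real.mul_rpow (exp_pos _).le h1.le
            _ ≤ exp (2 * D) * y ^ (1 + A) := by
                refine mul_le_mul_of_nonneg_right ?_ (Real.rpow_nonneg h1.le _)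
                rw [← Real.exp_mul]
                apply Real.exp_le_exp.2; nlinarith
        have hyp : 0 < y ^ (1 + A) := Real.rpow_pos_of_pos h1 _
        have : y ^ (1 + A) * f ω y ≤ y ^ (1 + A) * (exp (2 * D) * f ω z) := by
          refine m.trans ?_
          have := mul_le_mul_of_nonneg_right hz (hf.nonneg ω z)
          linarith
        exact le_of_mul_le_mul_left this hyp
      rw [e]
      have hfz := hf.nonneg ω z
      have hfy := hf.nonneg ω y
      have hE : 1 ≤ exp D := Real.one_le_exp hD0
      calc f ω y * DT b z ≤ (exp (2 * D) * f ω z) * (exp D * DT a y) :=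
            mul_le_mul hfyz g3 (by linarith) (by positivity)
        _ ≤ exp D * ((exp (2 * D) * f ω z) * (exp D * DT a y)) := by
            refine le_mul_of_one_le_left ?_ hE
            have : 0 ≤ DT a y := by linarith
            positivity
        _ = _ := by ring
    · obtain ⟨g1, g2, g3, g4⟩ := Sinv_param hc (by linarith) hcb hab (by linarith) hx
      have q := hf.anti ω _ _ h4 g1 (by linarith)
      have e : exp (2 * (a - b) / c) ≤ exp (4 / c * |a - b|) := by
        apply Real.exp_le_exp.2
        rw [abs_of_nonneg (by linarith), div_mul_eq_mul_div]
        apply div_le_div_of_nonneg_right _ hc.le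
        linarith
      have hfz := hf.nonneg ω (Sinv b x)
      calc _ ≤ f ω (Sinv b x) * (exp (2 * (a - b) / c) * DT a (Sinv a x)) :=
            mul_le_mul q g4 (by linarith) hfz
        _ ≤ f ω (Sinv b x) * (exp (4 / c * |a - b|) * DT a (Sinv a x)) := by
            gcongr
        _ = _ := by ring
  rw [← mul_div_assoc, div_le_div_iff₀ (by linarith) (by linarith), mul_assoc]
  exact key

lemma right_mem {x : ℝ} (hx : x ∈ Set.Ioc (0:ℝ) 1) : (x + 1) / 2 ∈ Set.Ioc (0:ℝ) 1 :=
  ⟨by linarith [hx.1], by linarith [hx.2]⟩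

lemma Reg.Pop {α c A Λ B f} (H : AlphaHyp α c A Λ) (hf : Reg A B f) :
    Reg A (B + 4 / c * Λ) (Pop α f) := by
  have hA0 := H.A_pos
  constructor
  · intro ω x hx
    simp only [_root_.Pop, if_neg hx]
  · intro ω x
    unfold _root_.Pop
    split_ifs with hx
    · have h1 := (Sinv_spec (H.pos ω) hx).1
      have := DT_pos (H.pos ω) h1.le
      have := hf.nonneg ω (Sinv (α ω) x)
      have := hf.nonneg ω ((x + 1) / 2)
      positivity
    · exact le_rfl
  · intro ω x y h0 hxy hy
    have hx' : x ∈ Set.Ioc (0:ℝ) 1 := ⟨h0, by linarith⟩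
    have hy' : y ∈ Set.Ioc (0:ℝ) 1 := ⟨by linarith, hy⟩
    simp only [_root_.Pop, if_pos hx', if_pos hy']
    obtain ⟨h1, h2, h3⟩ := Sinv_spec (H.pos ω) hx'
    obtain ⟨h4, h5, h6⟩ := Sinv_spec (H.pos ω) hy'
    have hm := Sinv_mono (H.pos ω) hx' hy' hxy
    have D1 := DT_pos (H.pos ω) h1.le
    refine add_le_add ?_ ?_
    · exact div_le_div₀ (hf.nonneg _ _) (hf.anti _ _ _ h1 hm (by linarith)) (by linarith)
        (DT_mono (H.pos ω) h1.le hm)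
    · have := hf.anti ω ((x + 1) / 2) ((y + 1) / 2) (by linarith) (by linarith) (by linarith)
      linarith
  · intro ω x y h0 hxy hy
    have hx' : x ∈ Set.Ioc (0:ℝ) 1 := ⟨h0, by linarith⟩
    have hy' : y ∈ Set.Ioc (0:ℝ) 1 := ⟨by linarith, hy⟩
    simp only [_root_.Pop, if_pos hx', if_pos hy']
    obtain ⟨h1, h2, h3⟩ := Sinv_spec (H.pos ω) hx'
    obtain ⟨h4, h5, h6⟩ := Sinv_spec (H.pos ω) hy'
    have hm := Sinv_mono (H.pos ω) hx' hy' hxy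
    rw [mul_add, mul_add]
    refine add_le_add ?_ ?_
    · have hform : ∀ u : ℝ, 0 < u → lb (α ω) u ^ (1 + A) * (f ω u / DT (α ω) u) =
          (u ^ (1 + A) * f ω u) *
            ((1 + (2 * u) ^ (α ω)) ^ (1 + A) / (1 + (1 + α ω) * (2 * u) ^ (α ω))) := by
        intro u hu
        unfold lb DT
        rw [Real.mul_rpow hu.le (by positivity)]
        ring
      have e1 := hform _ h1
      have e2 := hform _ h4
      rw [h3] at e1
      rw [h6] at e2
      rw [e1, e2]
      have hp1 := H.pos ω
      refine mul_le_mul (hf.mono ω _ _ h1 hm (by linarith))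
        (weight_mono hp1 (H.upper ω) (by positivity)
          (Real.rpow_le_rpow (by linarith) (by linarith) hp1.le)) (by positivity) ?_
      have := hf.nonneg ω (Sinv (α ω) y)
      positivity
    · have hform : ∀ u : ℝ, 0 < u → u ^ (1 + A) * (f ω ((u + 1) / 2) / 2) =
          (((u + 1) / 2) ^ (1 + A) * f ω ((u + 1) / 2)) * ((2 * u / (u + 1)) ^ (1 + A) / 2) := by
        intro u hu
        have : u = (u + 1) / 2 * (2 * u / (u + 1)) := by field_simp
        conv_lhs => rw [show u ^ (1 + A) = ((u + 1) / 2) ^ (1 + A) * (2 * u / (u + 1)) ^ (1 + A) by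
          rw [← Real.mul_rpow (by positivity) (by positivity), ← this]]
        ring
      rw [hform x h0, hform y hy'.1]
      have hy0 := hy'.1
      have := hf.nonneg ω ((y + 1) / 2)
      refine mul_le_mul (hf.mono ω _ _ (by linarith) (by linarith) (by linarith)) ?_
        (by positivity) (by positivity)
      refine div_le_div_of_nonneg_right (Real.rpow_le_rpow (by positivity) ?_ (by linarith))
        (by norm_num)
      rw [div_le_div_iff₀ (by linarith) (by linarith)]
      nlinarith
  · intro s t x
    unfold _root_.Pop
    split_ifs with hx
    · have hl := H.lip s t
      have e : exp ((B + 4 / c * Λ) * |s - t|) = exp (B * |s - t|) * exp (4 / c * Λ * |s - t|) := by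
        rw [← exp_add]; congr 1; ring
      have hc := H.c_pos
      have hE : exp (4 / c * |α s - α t|) ≤ exp (4 / c * Λ * |s - t|) := by
        apply Real.exp_le_exp.2
        rw [mul_assoc]
        gcongr
      have hE1 : 1 ≤ exp (4 / c * Λ * |s - t|) := by
        apply Real.one_le_exp
        have := H.Λ_nonneg
        positivity
      rw [e, mul_add]
      obtain ⟨h1, h2, h3⟩ := Sinv_spec (H.pos s) hx
      obtain ⟨h4, h5, h6⟩ := Sinv_spec (H.pos t) hx
      have D1 := DT_pos (H.pos s) h1.le
      have D2 := DT_pos (H.pos t) h4.le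
      refine add_le_add ?_ ?_
      · have q1 : f s (Sinv (α s) x) / DT (α s) (Sinv (α s) x) ≤
            exp (B * |s - t|) * (f t (Sinv (α s) x) / DT (α s) (Sinv (α s) x)) := by
          rw [← mul_div_assoc]
          exact div_le_div_of_nonneg_right (hf.loglip s t _) (by linarith)
        have q2 := left_compare hf hc (H.lower s) (H.lower t) (H.upper s) (H.upper t) H.A_lt hx (t : S1)
        refine q1.trans ?_
        rw [mul_assoc]
        refine mul_le_mul_of_nonneg_left (q2.trans ?_) (exp_pos _).le
        refine mul_le_mul_of_nonneg_right hE ?_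
        exact div_nonneg (hf.nonneg _ _) (by linarith)
      · have q := hf.loglip s t ((x + 1) / 2)
        have n := hf.nonneg t ((x + 1) / 2)
        have : exp (B * |s - t|) * f t ((x + 1) / 2) ≤
            exp (4 / c * Λ * |s - t|) * (exp (B * |s - t|) * f t ((x + 1) / 2)) :=
          le_mul_of_one_le_left (by positivity) hE1
        linarith
    · simp

lemma Reg.Qop {A B g} (hg : Reg A B g) : Reg A (B / 4) (Qop g) := by
  constructor
  · intro ω x hx
    unfold _root_.Qop
    simp [hg.supp _ x hx]
  · intro ω x
    unfold _root_.Qop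
    exact div_nonneg (Finset.sum_nonneg fun k _ => hg.nonneg _ _) (by norm_num)
  · intro ω x y h1 h2 h3
    unfold _root_.Qop
    refine div_le_div_of_nonneg_right (Finset.sum_le_sum fun k _ => hg.anti _ _ _ h1 h2 h3) (by norm_num)
  · intro ω x y h1 h2 h3
    unfold _root_.Qop
    rw [← mul_div_assoc, ← mul_div_assoc, Finset.mul_sum, Finset.mul_sum]
    refine div_le_div_of_nonneg_right (Finset.sum_le_sum fun k _ => hg.mono _ _ _ h1 h2 h3) (by norm_num)
  · intro s t x
    rw [Qop_coe, Qop_coe, ← mul_div_assoc, Finset.mul_sum]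
    refine div_le_div_of_nonneg_right (Finset.sum_le_sum fun k _ => ?_) (by norm_num)
    refine (hg.loglip _ ((t + k) / 4) _).trans (le_of_eq ?_)
    congr 2
    have : (s + k) / 4 - (t + k) / 4 = (s - t) / 4 := by ring
    rw [this, abs_div, abs_of_pos (by norm_num : (0:ℝ) < 4)]
    ring

lemma Reg.mono_B {A B B' f} (hf : Reg A B f) (h : B ≤ B') : Reg A B' f :=
  { hf with
    loglip := fun s t x => (hf.loglip s t x).trans (by
      have := hf.nonneg t x
      gcongr) }

/-- transfer operator -/
def Lop (α : S1 → ℝ) (f : S1 → ℝ → ℝ) : S1 → ℝ → ℝ := Qop (Pop α f)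

lemma Reg.Lop {α c A Λ B f} (H : AlphaHyp α c A Λ) (hB : 4 / c * Λ ≤ B) (hf : Reg A B f) :
    Reg A B (Lop α f) := by
  have h := (hf.Pop H).Qop
  refine h.mono_B ?_
  have : 0 ≤ 4 / c * Λ := mul_nonneg (div_nonneg (by norm_num) H.c_pos.le) H.Λ_nonneg
  linarith

lemma Reg.add {A B f g} (hf : Reg A B f) (hg : Reg A B g) : Reg A B (fun ω x => f ω x + g ω x) where
  supp ω x hx := by simp [hf.supp ω x hx, hg.supp ω x hx]
  nonneg ω x := add_nonneg (hf.nonneg ω x) (hg.nonneg ω x)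
  anti ω x y h1 h2 h3 := add_le_add (hf.anti ω x y h1 h2 h3) (hg.anti ω x y h1 h2 h3)
  mono ω x y h1 h2 h3 := by
    rw [mul_add, mul_add]
    exact add_le_add (hf.mono ω x y h1 h2 h3) (hg.mono ω x y h1 h2 h3)
  loglip s t x := by
    rw [mul_add]
    exact add_le_add (hf.loglip s t x) (hg.loglip s t x)

lemma Reg.smul {A B f} {r : ℝ} (hr : 0 ≤ r) (hf : Reg A B f) : Reg A B (fun ω x => r * f ω x) where
  supp ω x hx := by simp [hf.supp ω x hx]
  nonneg ω x := mul_nonneg hr (hf.nonneg ω x)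
  anti ω x y h1 h2 h3 := mul_le_mul_of_nonneg_left (hf.anti ω x y h1 h2 h3) hr
  mono ω x y h1 h2 h3 := by
    have := mul_le_mul_of_nonneg_left (hf.mono ω x y h1 h2 h3) hr
    linarith
  loglip s t x := by
    have := mul_le_mul_of_nonneg_left (hf.loglip s t x) hr
    linarith

lemma Reg.zero {A B} : Reg A B (fun _ _ => 0) := by
  constructor <;> intros <;> simp

lemma Reg.min {A B f g} (hf : Reg A B f) (hg : Reg A B g) :
    Reg A B (fun ω x => min (f ω x) (g ω x)) where
  supp ω x hx := by simp [hf.supp ω x hx, hg.supp ω x hx]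
  nonneg ω x := le_min (hf.nonneg ω x) (hg.nonneg ω x)
  anti ω x y h1 h2 h3 := min_le_min (hf.anti ω x y h1 h2 h3) (hg.anti ω x y h1 h2 h3)
  mono ω x y h1 h2 h3 := by
    have hx : 0 ≤ x ^ (1 + A) := Real.rpow_nonneg h1.le _
    have hy : 0 ≤ y ^ (1 + A) := Real.rpow_nonneg (by linarith) _
    rw [mul_min_of_nonneg _ _ hx, mul_min_of_nonneg _ _ hy]
    exact min_le_min (hf.mono ω x y h1 h2 h3) (hg.mono ω x y h1 h2 h3)
  loglip s t x := by
    rw [mul_min_of_nonneg _ _ (exp_pos _).le]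
    exact min_le_min (hf.loglip s t x) (hg.loglip s t x)

lemma exists_lifts (ω η : S1) : ∃ s t : ℝ, (s : S1) = ω ∧ (t : S1) = η ∧ |s - t| = dist ω η := by
  have h1 : ((lift ω - lift η : ℝ) : S1) = ω - η := by
    rw [AddCircle.coe_sub, coe_lift, coe_lift]
  have h2 := UnitAddCircle.norm_eq (x := lift ω - lift η)
  rw [h1] at h2
  refine ⟨lift ω - round (lift ω - lift η), lift η, ?_, coe_lift _, ?_⟩
  · rw [AddCircle.coe_sub, coe_lift]
    have : ((round (lift ω - lift η) : ℝ) : S1) = 0 := by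
      rw [AddCircle.coe_eq_zero_iff]
      exact ⟨round (lift ω - lift η), by simp⟩
    rw [this, sub_zero]
  · rw [dist_eq_norm, h2]
    congr 1; ring

lemma dist_le_one (ω η : S1) : dist ω η ≤ 1 := by
  rw [dist_eq_norm]
  have := AddCircle.norm_le_half_period (p := 1) (x := ω - η) (by norm_num)
  norm_num at this
  linarith

lemma Reg.lip_aux {A B f} (hf : Reg A B f) (hA0 : 0 < A) (hA : A < 1) (hB : 0 ≤ B) {ε V : ℝ}
    (hε : 0 < ε) (hV : ∀ ω, f ω ε ≤ V) (ω η : S1) {x y : ℝ}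
    (hx : x ∈ Set.Icc ε 1) (hy : y ∈ Set.Icc ε 1) :
    f ω x - f η y ≤ V * (B * exp B + 2 / ε) * max (dist ω η) (|x - y|) := by
  have hV0 : 0 ≤ V := (hf.nonneg 0 ε).trans (hV 0)
  have hfV : ∀ ω x, x ∈ Set.Icc ε 1 → f ω x ≤ V := fun ω x hx =>
    (hf.anti ω ε x hε hx.1 hx.2).trans (hV ω)
  obtain ⟨s, t, hs, ht, hst⟩ := exists_lifts ω η
  have h1 : f ω x - f η x ≤ V * (B * exp B) * dist ω η := by
    have := hf.loglip s t x
    rw [hs, ht, hst] at this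
    set d := dist ω η
    have hd0 : 0 ≤ d := dist_nonneg
    have hd1 : d ≤ 1 := dist_le_one _ _
    have e1 : exp (B * d) - 1 ≤ B * d * exp B := by
      have q := Real.add_one_le_exp (-(B * d))
      have q2 : exp (B * d) * exp (-(B * d)) = 1 := by rw [← exp_add]; simp
      have q3 : exp (B * d) ≤ exp B := Real.exp_le_exp.2 (by nlinarith)
      have q4 := mul_le_mul_of_nonneg_left q (exp_pos (B * d)).le
      have q5 := mul_le_mul_of_nonneg_left q3 (mul_nonneg hB hd0)
      nlinarith
    have e2 : 0 ≤ B * d * exp B := by positivity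
    have e3 := hfV η x hx
    have e4 := hf.nonneg η x
    calc f ω x - f η x ≤ (exp (B * d) - 1) * f η x := by linarith
      _ ≤ (B * d * exp B) * f η x := by gcongr
      _ ≤ (B * d * exp B) * V := by gcongr
      _ = _ := by ring
  have h2 : f η x - f η y ≤ V * (2 / ε) * |x - y| := by
    rcases le_total y x with hyx | hxy
    · have := hf.anti η y x (by linarith [hy.1]) hyx hx.2
      have : 0 ≤ V * (2 / ε) * |x - y| := by positivity
      linarith
    · have hx0 : 0 < x := by linarith [hx.1]
      have hy0 : 0 < y := by linarith [hy.1]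
      have m := hf.mono η x y hx0 hxy hy.2
      have b := one_add_mul_self_le_rpow_one_add (s := x / y - 1)
        (by have : 0 ≤ x / y := by positivity
            linarith) (p := 1 + A) (by linarith)
      have e0 : (x / y) ^ (1 + A) * f η x ≤ f η y := by
        rw [Real.div_rpow hx0.le hy0.le, div_mul_eq_mul_div, div_le_iff₀ (by positivity)]
        linarith
      have e1 : 1 + (x / y - 1) = x / y := by ring
      rw [e1] at b
      have n := hf.nonneg η x
      have e2 := mul_le_mul_of_nonneg_right b n
      have e3 : 1 - x / y ≤ |x - y| / ε := by
        rw [abs_of_nonpos (by linarith), le_div_iff₀ hε]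
        have : (1 - x / y) * y = y - x := by field_simp
        have h3 : 0 ≤ 1 - x / y := by
          rw [sub_nonneg, div_le_one hy0]; exact hxy
        nlinarith [hy.1]
      have h3 : 0 ≤ 1 - x / y := by
        rw [sub_nonneg, div_le_one hy0]; exact hxy
      have n2 := hfV η x hx
      calc f η x - f η y ≤ (1 + A) * (1 - x / y) * f η x := by linarith
        _ ≤ 2 * (|x - y| / ε) * V := by
            gcongr
            linarith
        _ = _ := by ring
  have m1 := le_max_left (dist ω η) (|x - y|)
  have m2 := le_max_right (dist ω η) (|x - y|)
  have n1 : 0 ≤ V * (B * exp B) := by positivity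
  have n2 : 0 ≤ V * (2 / ε) := by positivity
  have := mul_le_mul_of_nonneg_left m1 n1
  have := mul_le_mul_of_nonneg_left m2 n2
  linarith

lemma Reg.lip {A B f} (hf : Reg A B f) (hA0 : 0 < A) (hA : A < 1) (hB : 0 ≤ B) {ε V : ℝ}
    (hε : 0 < ε) (hV : ∀ ω, f ω ε ≤ V) :
    LipschitzOnWith (Real.toNNReal (V * (B * exp B + 2 / ε))) (fun z : S1 × ℝ => f z.1 z.2)
      (Set.univ ×ˢ Set.Icc ε 1) := by
  have hV0 : 0 ≤ V := (hf.nonneg 0 ε).trans (hV 0)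
  apply LipschitzOnWith.of_dist_le_mul
  rintro ⟨ω, x⟩ ⟨-, hx⟩ ⟨η, y⟩ ⟨-, hy⟩
  rw [Real.coe_toNNReal _ (by positivity), Real.dist_eq, Prod.dist_eq, Real.dist_eq]
  rw [abs_sub_le_iff]
  refine ⟨hf.lip_aux hA0 hA hB hε hV ω η hx hy, ?_⟩
  have := hf.lip_aux hA0 hA hB hε hV η ω hy hx
  rwa [dist_comm η ω, abs_sub_comm y x] at this

lemma Reg.exists_V {A B f} (hf : Reg A B f) (hB : 0 ≤ B) (ε : ℝ) : ∃ V, ∀ ω, f ω ε ≤ V := by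
  refine ⟨exp B * f 0 ε, fun ω => ?_⟩
  obtain ⟨s, t, hs, ht, hst⟩ := exists_lifts ω 0
  have := hf.loglip s t ε
  rw [hs, ht, hst] at this
  refine this.trans ?_
  have n := hf.nonneg 0 ε
  have := dist_le_one ω 0
  gcongr
  nlinarith

lemma Reg.lip_compact {A B f} (hf : Reg A B f) (hA0 : 0 < A) (hA : A < 1) (hB : 0 ≤ B)
    (K : Set (S1 × ℝ)) (hK : IsCompact K) (hKs : K ⊆ Set.univ ×ˢ Set.Ioc (0:ℝ) 1) :
    ∃ L : ℝ≥0, LipschitzOnWith L (fun z : S1 × ℝ => f z.1 z.2) K := by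
  rcases K.eq_empty_or_nonempty with h | h
  · exact ⟨0, by rw [h]; simp⟩
  · obtain ⟨z, hz, hmin⟩ := hK.exists_isMinOn h (continuous_snd.continuousOn)
    have hz' := (hKs hz).2
    obtain ⟨V, hV⟩ := hf.exists_V hB z.2
    exact ⟨_, (hf.lip hA0 hA hB hz'.1 hV).mono
      fun w hw => ⟨trivial, hmin hw, (hKs hw).2.2⟩⟩

lemma Reg.continuousOn {A B f} (hf : Reg A B f) (hA0 : 0 < A) (hA : A < 1) (hB : 0 ≤ B) :
    ContinuousOn (fun z : S1 × ℝ => f z.1 z.2) (Set.univ ×ˢ Set.Ioc (0:ℝ) 1) := by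
  rintro ⟨ω, x⟩ ⟨-, hx⟩
  have hx2 : 0 < x / 2 := by linarith [hx.1]
  obtain ⟨V, hV⟩ := hf.exists_V hB (x / 2)
  have h := (hf.lip hA0 hA hB hx2 hV).continuousOn
  have h2 := h (ω, x) ⟨trivial, by linarith [hx.1], hx.2⟩
  refine h2.mono_of_mem_nhdsWithin ?_
  have : (Set.univ : Set S1) ×ˢ Set.Ioi (x / 2) ∈ 𝓝 (ω, x) :=
    (isOpen_univ.prod isOpen_Ioi).mem_nhds ⟨trivial, by simp only [Set.mem_Ioi]; linarith [hx.1]⟩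
  filter_upwards [mem_nhdsWithin_of_mem_nhds this, self_mem_nhdsWithin] with z h1 h2
  exact ⟨trivial, le_of_lt h1.2, h2.2.2⟩

lemma Reg.measurable {A B f} (hf : Reg A B f) (hA0 : 0 < A) (hA : A < 1) (hB : 0 ≤ B) :
    Measurable (fun z : S1 × ℝ => f z.1 z.2) := by
  classical
  have h := ContinuousOn.measurable_piecewise (hf.continuousOn hA0 hA hB)
    (continuousOn_const (c := (0:ℝ)) (s := (Set.univ ×ˢ Set.Ioc (0:ℝ) 1 : Set (S1 × ℝ))ᶜ))
    (MeasurableSet.univ.prod measurableSet_Ioc)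
  convert h using 1
  ext z
  by_cases hz : z ∈ (Set.univ ×ˢ Set.Ioc (0:ℝ) 1 : Set (S1 × ℝ))
  · simp [Set.piecewise, hz]
  · simp only [Set.piecewise, hz, if_false]
    exact hf.supp _ _ fun h => hz ⟨trivial, h⟩

/-- pointwise bound -/
def Bd (A D : ℝ) (f : S1 → ℝ → ℝ) : Prop := ∀ ω x, x ∈ Set.Ioc (0:ℝ) 1 → f ω x ≤ D * x ^ (-A)

lemma isClosed_reg (A B D : ℝ) : IsClosed {f : S1 → ℝ → ℝ | Reg A B f ∧ Bd A D f} := by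
  have e : {f : S1 → ℝ → ℝ | Reg A B f ∧ Bd A D f} =
    {f | (∀ ω x, x ∉ Set.Ioc (0:ℝ) 1 → f ω x = 0) ∧ (∀ ω x, 0 ≤ f ω x) ∧
      (∀ ω x y, 0 < x → x ≤ y → y ≤ 1 → f ω y ≤ f ω x) ∧
      (∀ ω x y, 0 < x → x ≤ y → y ≤ 1 → x ^ (1 + A) * f ω x ≤ y ^ (1 + A) * f ω y) ∧
      (∀ (s t : ℝ) x, f (s : S1) x ≤ exp (B * |s - t|) * f (t : S1) x) ∧
      (∀ ω x, x ∈ Set.Ioc (0:ℝ) 1 → f ω x ≤ D * x ^ (-A))} := by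
    ext f
    constructor
    · rintro ⟨h, h'⟩
      exact ⟨h.1, h.2, h.3, h.4, h.5, h'⟩
    · rintro ⟨h1, h2, h3, h4, h5, h6⟩
      exact ⟨⟨h1, h2, h3, h4, h5⟩, h6⟩
  rw [e]
  have ev : ∀ ω x, Continuous (fun f : S1 → ℝ → ℝ => f ω x) := fun ω x =>
    (continuous_apply x).comp (continuous_apply ω)
  simp only [Set.ofPred_and, Set.ofPred_forall]
  refine IsClosed.inter ?_ (IsClosed.inter ?_ (IsClosed.inter ?_ (IsClosed.inter ?_
    (IsClosed.inter ?_ ?_))))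
  · exact isClosed_iInter fun ω => isClosed_iInter fun x => isClosed_iInter fun _ =>
      isClosed_eq (ev _ _) continuous_const
  · exact isClosed_iInter fun ω => isClosed_iInter fun x =>
      isClosed_le continuous_const (ev _ _)
  · exact isClosed_iInter fun ω => isClosed_iInter fun x => isClosed_iInter fun y =>
      isClosed_iInter fun _ => isClosed_iInter fun _ => isClosed_iInter fun _ =>
      isClosed_le (ev _ _) (ev _ _)
  · exact isClosed_iInter fun ω => isClosed_iInter fun x => isClosed_iInter fun y =>
      isClosed_iInter fun _ => isClosed_iInter fun _ => isClosed_iInter fun _ =>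
      isClosed_le (continuous_const.mul (ev _ _)) (continuous_const.mul (ev _ _))
  · exact isClosed_iInter fun ω => isClosed_iInter fun x => isClosed_iInter fun y =>
      isClosed_le (ev _ _) (continuous_const.mul (ev _ _))
  · exact isClosed_iInter fun ω => isClosed_iInter fun x => isClosed_iInter fun _ =>
      isClosed_le (ev _ _) continuous_const

lemma isCompact_reg (A B D : ℝ) : IsCompact {f : S1 → ℝ → ℝ | Reg A B f ∧ Bd A D f} := by
  have h : IsCompact (Set.pi Set.univ (fun _ : S1 => Set.pi Set.univ
      (fun x : ℝ => Set.Icc (0:ℝ) (|D * x ^ (-A)|)))) :=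
    isCompact_univ_pi fun _ => isCompact_univ_pi fun x => isCompact_Icc
  refine h.of_isClosed_subset (isClosed_reg A B D) ?_
  rintro f ⟨hf, hb⟩ ω - x -
  refine ⟨hf.nonneg ω x, ?_⟩
  by_cases hx : x ∈ Set.Ioc (0:ℝ) 1
  · exact (hb ω x hx).trans (le_abs_self _)
  · rw [hf.supp ω x hx]; exact abs_nonneg _

/-- the phase space -/
abbrev XX : Type := S1 × Set.Ioc (0:ℝ) 1

lemma compact_seq {A B D : ℝ} (hA0 : 0 < A) (hA : A < 1) (hB : 0 ≤ B) (f : ℕ → S1 → ℝ → ℝ)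
    (hf : ∀ n, Reg A B (f n)) (hb : ∀ n, Bd A D (f n)) :
    ∃ k, Reg A B k ∧ Bd A D k ∧ ∃ φ : ℕ → ℕ, StrictMono φ ∧
      ∀ ω x, Tendsto (fun n => f (φ n) ω x) atTop (𝓝 (k ω x)) := by
  have : LocallyCompactSpace (Set.Ioc (0:ℝ) 1) :=
    (isLocallyClosed_Ioc (a := (0:ℝ)) (b := 1)).locallyCompactSpace
  have hcont : ∀ g, Reg A B g → Continuous (fun z : XX => g z.1 z.2) := by
    intro g hg
    have h1 := hg.continuousOn hA0 hA hB
    refine h1.comp_continuous (f := fun z : XX => ((z.1, (z.2 : ℝ)) : S1 × ℝ)) (by fun_prop) ?_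
    intro z
    exact ⟨trivial, z.2.2⟩
  let S : Set C(XX, ℝ) := {g | ∃ f, (Reg A B f ∧ Bd A D f) ∧ ∀ z : XX, g z = f z.1 z.2}
  have hS1 : IsCompact (ContinuousMap.toFun '' S) := by
    have hρ : Continuous (fun (f : S1 → ℝ → ℝ) (z : XX) => f z.1 z.2) :=
      continuous_pi fun z => (continuous_apply (z.2 : ℝ)).comp (continuous_apply z.1)
    have := (isCompact_reg A B D).image hρ
    convert this using 1
    ext g
    constructor
    · rintro ⟨g, ⟨f, hf, hg⟩, rfl⟩
      exact ⟨f, hf, by ext z; exact (hg z).symm⟩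
    · rintro ⟨f, hf, rfl⟩
      exact ⟨⟨_, hcont f hf.1⟩, ⟨f, hf, fun z => rfl⟩, rfl⟩
  have hS2 : Equicontinuous ((↑) : S → XX → ℝ) := by
    intro z
    rw [Metric.equicontinuousAt_iff]
    intro ε hε
    have hz := z.2.2
    set x0 : ℝ := (z.2 : ℝ) with hx0
    have hx2 : 0 < x0 / 2 := by linarith [hz.1]
    set V := D * (x0 / 2) ^ (-A)
    set L : ℝ := (Real.toNNReal (V * (B * exp B + 2 / (x0 / 2))) : ℝ) with hL
    have hL0 : 0 ≤ L := NNReal.coe_nonneg _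
    refine ⟨min (x0 / 2) (ε / (L + 1)), lt_min hx2 (by positivity), ?_⟩
    rintro w hw ⟨g, f, ⟨hf, hb⟩, hg⟩
    have hlip := hf.lip hA0 hA hB hx2
      (V := V) (fun ω => hb ω _ ⟨hx2, by linarith [hz.2]⟩)
    have hw1 : dist w z < x0 / 2 := hw.trans_le (min_le_left _ _)
    have hw2 : dist w z < ε / (L + 1) := hw.trans_le (min_le_right _ _)
    have hd : dist (w.2 : ℝ) z.2 ≤ dist w z := by
      rw [Prod.dist_eq]; exact le_max_right _ _
    have hw3 : x0 / 2 ≤ (w.2 : ℝ) := by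
      rw [Real.dist_eq] at hd
      have := (abs_sub_lt_iff.1 (hd.trans_lt hw1)).2
      rw [← hx0] at this
      linarith
    have := hlip.dist_le_mul ((z.1, (z.2 : ℝ)) : S1 × ℝ) ⟨trivial, by rw [← hx0]; constructor <;> linarith [hz.2]⟩
      ((w.1, (w.2 : ℝ)) : S1 × ℝ) ⟨trivial, hw3, w.2.2.2⟩
    have e : dist ((z.1, (z.2 : ℝ)) : S1 × ℝ) ((w.1, (w.2 : ℝ)) : S1 × ℝ) = dist w z := by
      rw [dist_comm w z]; rfl
    rw [e, ← hL] at this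
    change dist (g z) (g w) < ε
    rw [hg, hg]
    refine this.trans_lt ?_
    rw [lt_div_iff₀ (by linarith)] at hw2
    have : 0 ≤ dist w z := dist_nonneg
    linarith
  have hS := ArzelaAscoli.isCompact_of_equicontinuous S hS1 hS2
  let F : ℕ → C(XX, ℝ) := fun n => ⟨_, hcont (f n) (hf n)⟩
  have hF : ∀ n, F n ∈ S := fun n => ⟨f n, ⟨hf n, hb n⟩, fun z => rfl⟩
  obtain ⟨g, ⟨k, ⟨hk1, hk2⟩, hk3⟩, φ, hφ, hlim⟩ := hS.tendsto_subseq hF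
  refine ⟨k, hk1, hk2, φ, hφ, fun ω x => ?_⟩
  by_cases hx : x ∈ Set.Ioc (0:ℝ) 1
  · have := ((continuous_eval_const (F := C(XX, ℝ)) ((ω, ⟨x, hx⟩) : XX)).tendsto g).comp hlim
    rw [hk3] at this
    exact this
  · simp only [hk1.supp ω x hx, (hf _).supp ω x hx]
    exact tendsto_const_nhds

lemma Leb_eq : Leb = (volume : Measure S1).prod (volume.restrict (Set.Ioc (0:ℝ) 1)) := by
  unfold Leb
  rw [Measure.restrict_congr_set Ioc_ae_eq_Icc]

instance : IsProbabilityMeasure (volume.restrict (Set.Ioc (0:ℝ) 1)) := ⟨by simp⟩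

instance : IsProbabilityMeasure (volume : Measure S1) := ⟨UnitAddCircle.measure_univ⟩

instance : IsProbabilityMeasure Leb := by
  rw [Leb_eq]; infer_instance

lemma Ta_left {a y : ℝ} (hy : y ≤ 1 / 2) : Ta a y = lb a y := by
  unfold Ta lb; rw [if_pos hy]

lemma Ta_right {a y : ℝ} (hy : 1 / 2 < y) : Ta a y = 2 * y - 1 := by
  unfold Ta; rw [if_neg (not_le.2 hy)]

lemma fiber_dual {a : ℝ} (ha : 0 < a) (f : ℝ → ℝ) (hf0 : ∀ x, 0 ≤ f x) (hfm : Measurable f)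
    (φ : ℝ → ℝ≥0∞) (hφ : Measurable φ) :
    ∫⁻ x in Set.Ioc (0:ℝ) 1, ENNReal.ofReal (f x) * φ (Ta a x) =
    ∫⁻ x in Set.Ioc (0:ℝ) 1,
      ENNReal.ofReal (f (Sinv a x) / DT a (Sinv a x) + f ((x + 1) / 2) / 2) * φ x := by
  have hL : ∫⁻ x in Set.Ioc (0:ℝ) 1, ENNReal.ofReal (f (Sinv a x) / DT a (Sinv a x)) * φ x =
      ∫⁻ x in Set.Ioc (0:ℝ) (1 / 2), ENNReal.ofReal (f x) * φ (Ta a x) := by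
    have him : lb a '' Set.Ioc (0:ℝ) (1 / 2) = Set.Ioc 0 1 := by
      ext x
      constructor
      · rintro ⟨y, hy, rfl⟩; exact lb_mem ha hy
      · intro hx
        obtain ⟨y, hy, h⟩ := exists_lb ha hx
        exact ⟨y, hy, h⟩
    have hinj : Set.InjOn (lb a) (Set.Ioc (0:ℝ) (1 / 2)) := by
      intro y hy z hz h
      rw [← Sinv_lb ha hy, ← Sinv_lb ha hz, h]
    have := lintegral_image_eq_lintegral_abs_deriv_mul (s := Set.Ioc (0:ℝ) (1 / 2))
      measurableSet_Ioc (fun y hy => (lb_hasDerivAt (a := a) hy.1).hasDerivWithinAt) hinj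
      (fun x => ENNReal.ofReal (f (Sinv a x) / DT a (Sinv a x)) * φ x)
    rw [him] at this
    rw [this]
    refine setLIntegral_congr_fun measurableSet_Ioc fun y hy => ?_
    have D := DT_pos ha hy.1.le
    rw [Sinv_lb ha hy, Ta_left hy.2, ← mul_assoc, ← ENNReal.ofReal_mul (abs_nonneg _),
      abs_of_pos (by linarith), mul_div_cancel₀ _ (by linarith)]
  have hR : ∫⁻ x in Set.Ioc (0:ℝ) 1, ENNReal.ofReal (f ((x + 1) / 2) / 2) * φ x =
      ∫⁻ x in Set.Ioc (1 / 2:ℝ) 1, ENNReal.ofReal (f x) * φ (Ta a x) := by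
    have him : (fun y : ℝ => 2 * y - 1) '' Set.Ioc (1 / 2:ℝ) 1 = Set.Ioc 0 1 := by
      ext x
      constructor
      · rintro ⟨y, hy, rfl⟩; constructor <;> simp only <;> linarith [hy.1, hy.2]
      · intro hx
        exact ⟨(x + 1) / 2, ⟨by linarith [hx.1], by linarith [hx.2]⟩, by ring⟩
    have hinj : Set.InjOn (fun y : ℝ => 2 * y - 1) (Set.Ioc (1 / 2:ℝ) 1) := by
      intro y hy z hz h
      simp only at h
      linarith
    have hd : ∀ y : ℝ, HasDerivAt (fun y : ℝ => 2 * y - 1) 2 y := fun y => by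
      simpa using ((hasDerivAt_id y).const_mul (2:ℝ)).sub_const 1
    have := lintegral_image_eq_lintegral_abs_deriv_mul (s := Set.Ioc (1 / 2:ℝ) 1)
      measurableSet_Ioc (fun y hy => (hd y).hasDerivWithinAt) hinj
      (fun x => ENNReal.ofReal (f ((x + 1) / 2) / 2) * φ x)
    rw [him] at this
    rw [this]
    refine setLIntegral_congr_fun measurableSet_Ioc fun y hy => ?_
    rw [Ta_right hy.1, ← mul_assoc, ← ENNReal.ofReal_mul (abs_nonneg _)]
    congr 2
    rw [abs_of_pos (by norm_num)]
    have : (2 * y - 1 + 1) / 2 = y := by ring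
    rw [this]; ring
  have hsplit : Set.Ioc (0:ℝ) 1 = Set.Ioc 0 (1 / 2) ∪ Set.Ioc (1 / 2) 1 :=
    (Set.Ioc_union_Ioc_eq_Ioc (by norm_num) (by norm_num)).symm
  have hdisj : Disjoint (Set.Ioc (0:ℝ) (1 / 2)) (Set.Ioc (1 / 2) 1) := by
    rw [Set.disjoint_left]
    intro x h1 h2
    linarith [h1.2, h2.1]
  conv_lhs => rw [hsplit, lintegral_union measurableSet_Ioc hdisj, ← hL, ← hR]
  rw [← lintegral_add_right _ (by fun_prop)]
  refine setLIntegral_congr_fun measurableSet_Ioc fun x hx => ?_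
  have D := DT_pos ha (Sinv_spec ha hx).1.le
  rw [ENNReal.ofReal_add (div_nonneg (hf0 _) (by linarith)) (div_nonneg (hf0 _) (by norm_num)),
    add_mul]

lemma circle_dual (g G φ : S1 → ℝ≥0∞) (hg : Measurable g) (hG : Measurable G) (hφ : Measurable φ)
    (h : ∀ t : ℝ, G (t : S1) = (∑ k ∈ Finset.range 4, g (((t + k) / 4 : ℝ) : S1)) / 4) :
    ∫⁻ ω, g ω * φ (Fm ω) = ∫⁻ ω, G ω * φ ω := by
  have hF : MeasurePreserving Fm (volume : Measure S1) volume :=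
    (AddCircle.ergodic_nsmul (T := 1) (n := 4) (by norm_num)).toMeasurePreserving
  have hFm := hF.measurable
  have e := hF.lintegral_comp (f := fun ω => G ω * φ ω) (hG.mul hφ)
  rw [← e]
  have hGF : ∀ ω, G (Fm ω) = (∑ k ∈ Finset.range 4, g (ω + ((k / 4 : ℝ) : S1))) / 4 := by
    intro ω
    have e : Fm ω = ((4 * lift ω : ℝ) : S1) := by
      conv_lhs => rw [← coe_lift ω]
      unfold Fm
      rw [← AddCircle.coe_nsmul]
      simp
    rw [e, h]
    congr 1
    refine Finset.sum_congr rfl fun k _ => ?_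
    have : (4 * lift ω + k) / 4 = lift ω + k / 4 := by ring
    rw [this, AddCircle.coe_add, coe_lift]
  have hk : ∀ k : ℕ, ∫⁻ ω, g (ω + ((k / 4 : ℝ) : S1)) * φ (Fm ω) = ∫⁻ ω, g ω * φ (Fm ω) := by
    intro k
    have := lintegral_add_right_eq_self (μ := (volume : Measure S1))
      (fun ω => g ω * φ (Fm ω)) ((k / 4 : ℝ) : S1)
    rw [← this]
    refine lintegral_congr fun ω => ?_
    congr 2
    unfold Fm
    rw [nsmul_add, ← AddCircle.coe_nsmul]
    have : (((4:ℕ) • (k / 4 : ℝ) : ℝ) : S1) = 0 := by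
      rw [AddCircle.coe_eq_zero_iff]
      refine ⟨k, ?_⟩
      simp
      ring
    rw [this, add_zero]
  have : ∀ ω, G (Fm ω) * φ (Fm ω) =
      (∑ k ∈ Finset.range 4, g (ω + ((k / 4 : ℝ) : S1)) * φ (Fm ω)) * 4⁻¹ := by
    intro ω
    rw [hGF, div_eq_mul_inv, ← Finset.sum_mul]
    ring
  simp_rw [this]
  rw [lintegral_mul_const _ (by fun_prop), lintegral_finsetSum _ (by intro k _; fun_prop)]
  simp_rw [hk]
  simp only [Finset.sum_const, Finset.card_range, nsmul_eq_mul]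
  rw [mul_comm, ← mul_assoc]
  push_cast
  rw [ENNReal.inv_mul_cancel (by norm_num) (by norm_num), one_mul]

lemma AlphaHyp.measurable {α c A Λ} (H : AlphaHyp α c A Λ) : Measurable α := by
  have : LipschitzWith (Real.toNNReal Λ) α := by
    apply LipschitzWith.of_dist_le_mul
    intro ω η
    obtain ⟨s, t, hs, ht, hst⟩ := exists_lifts ω η
    rw [Real.coe_toNNReal _ H.Λ_nonneg, ← hst, ← hs, ← ht]
    exact H.lip s t
  exact this.continuous.measurable

lemma measurable_Ta2 : Measurable (fun p : ℝ × ℝ => Ta p.1 p.2) := by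
  unfold Ta
  refine Measurable.ite (measurableSet_le measurable_snd measurable_const) ?_ (by fun_prop)
  refine measurable_snd.mul (measurable_const.add ?_)
  exact Measurable.pow (by fun_prop) (by fun_prop)

lemma measurable_Fm : Measurable Fm :=
  (AddCircle.ergodic_nsmul (T := 1) (n := 4) (by norm_num)).toMeasurePreserving.measurable

lemma AlphaHyp.measurable_T {α c A Λ} (H : AlphaHyp α c A Λ) : Measurable (Tskew α) := by
  unfold Tskew
  refine (measurable_Fm.comp measurable_fst).prodMk ?_
  exact measurable_Ta2.comp ((H.measurable.comp measurable_fst).prodMk measurable_snd)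

lemma skew_dual {α c A Λ B f} (H : AlphaHyp α c A Λ) (hB : 0 ≤ B) (hf : Reg A B f)
    (φ : S1 × ℝ → ℝ≥0∞) (hφ : Measurable φ) :
    ∫⁻ z, ENNReal.ofReal (f z.1 z.2) * φ (Tskew α z) ∂Leb =
    ∫⁻ z, ENNReal.ofReal (Lop α f z.1 z.2) * φ z ∂Leb := by
  have hc := H.c_pos
  have hΛ := H.Λ_nonneg
  have hB' : 0 ≤ B + 4 / c * Λ := by positivity
  have hPr := hf.Pop H
  have hQr := hPr.Qop
  have hfm := hf.measurable H.A_pos H.A_lt hB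
  have hPm := hPr.measurable H.A_pos H.A_lt hB'
  have hQm := hQr.measurable H.A_pos H.A_lt (by positivity)
  have hT := H.measurable_T
  have hFm := measurable_Fm
  rw [Leb_eq]
  have step1 : ∫⁻ z, ENNReal.ofReal (f z.1 z.2) * φ (Tskew α z)
        ∂((volume : Measure S1).prod (volume.restrict (Set.Ioc (0:ℝ) 1))) =
      ∫⁻ z, ENNReal.ofReal (Pop α f z.1 z.2) * φ (Fm z.1, z.2)
        ∂((volume : Measure S1).prod (volume.restrict (Set.Ioc (0:ℝ) 1))) := by
    rw [lintegral_prod _ (by fun_prop), lintegral_prod _ (by fun_prop)]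
    refine lintegral_congr fun ω => ?_
    have := fiber_dual (H.pos ω) (f ω) (hf.nonneg ω) (hfm.comp measurable_prodMk_left)
      (fun x => φ (Fm ω, x)) (hφ.comp measurable_prodMk_left)
    simp only [Tskew]
    rw [this]
    refine setLIntegral_congr_fun measurableSet_Ioc fun x hx => ?_
    simp only [Pop, if_pos hx]
  rw [step1, lintegral_prod_symm _ (by fun_prop), lintegral_prod_symm _ (by
    unfold Lop; fun_prop)]
  refine lintegral_congr fun x => ?_
  refine circle_dual (fun ω => ENNReal.ofReal (Pop α f ω x))
    (fun ω => ENNReal.ofReal (Lop α f ω x)) (fun ω => φ (ω, x))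
    ((hPm.comp measurable_prodMk_right).ennreal_ofReal)
    ((hQm.comp measurable_prodMk_right).ennreal_ofReal) (hφ.comp measurable_prodMk_right) ?_
  intro t
  simp only [Lop]
  rw [Qop_coe, ENNReal.ofReal_div_of_pos (by norm_num),
    ENNReal.ofReal_sum_of_nonneg (fun k _ => hPr.nonneg _ _)]
  norm_num

lemma map_withDensity {α c A Λ B f} (H : AlphaHyp α c A Λ) (hB : 0 ≤ B) (hf : Reg A B f) 
    {E : Set (S1 × ℝ)} (hE : MeasurableSet E) :
    ∫⁻ z in (Tskew α) ⁻¹' E, ENNReal.ofReal (f z.1 z.2) ∂Leb =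
    ∫⁻ z in E, ENNReal.ofReal (Lop α f z.1 z.2) ∂Leb := by
  have h := skew_dual H hB hf (E.indicator 1) (measurable_one.indicator hE)
  rw [← lintegral_indicator (H.measurable_T hE), ← lintegral_indicator hE]
  convert h using 2
  · ext z
    by_cases hz : Tskew α z ∈ E
    · simp [Set.indicator, hz]
    · simp [Set.indicator, hz]
  · ext z
    by_cases hz : z ∈ E
    · simp [Set.indicator, hz]
    · simp [Set.indicator, hz]

lemma Lop_apply (α : S1 → ℝ) (f : S1 → ℝ → ℝ) (ω : S1) {x : ℝ} (hx : x ∈ Set.Ioc (0:ℝ) 1) :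
    Lop α f ω x = (∑ k ∈ Finset.range 4,
      (f (((lift ω + k) / 4 : ℝ) : S1) (Sinv (α (((lift ω + k) / 4 : ℝ) : S1)) x) /
        DT (α (((lift ω + k) / 4 : ℝ) : S1)) (Sinv (α (((lift ω + k) / 4 : ℝ) : S1)) x) +
       f (((lift ω + k) / 4 : ℝ) : S1) ((x + 1) / 2) / 2)) / 4 := by
  unfold Lop Qop Pop
  simp only [if_pos hx]

lemma Lop_supp (α : S1 → ℝ) (f : S1 → ℝ → ℝ) (ω : S1) {x : ℝ} (hx : x ∉ Set.Ioc (0:ℝ) 1) :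
    Lop α f ω x = 0 := by
  unfold Lop Qop Pop
  simp only [if_neg hx]
  simp

lemma Lop_add (α : S1 → ℝ) (f g : S1 → ℝ → ℝ) :
    Lop α (fun ω x => f ω x + g ω x) = fun ω x => Lop α f ω x + Lop α g ω x := by
  funext ω x
  by_cases hx : x ∈ Set.Ioc (0:ℝ) 1
  · rw [Lop_apply _ _ _ hx, Lop_apply _ _ _ hx, Lop_apply _ _ _ hx, ← add_div,
      ← Finset.sum_add_distrib]
    congr 1
    refine Finset.sum_congr rfl fun k _ => ?_
    ring
  · simp [Lop_supp _ _ _ hx]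

lemma Lop_smul (α : S1 → ℝ) (r : ℝ) (f : S1 → ℝ → ℝ) :
    Lop α (fun ω x => r * f ω x) = fun ω x => r * Lop α f ω x := by
  funext ω x
  by_cases hx : x ∈ Set.Ioc (0:ℝ) 1
  · rw [Lop_apply _ _ _ hx, Lop_apply _ _ _ hx, ← mul_div_assoc, Finset.mul_sum]
    congr 1
    refine Finset.sum_congr rfl fun k _ => ?_
    ring
  · simp [Lop_supp _ _ _ hx]

lemma Lop_zero (α : S1 → ℝ) : Lop α (fun _ _ => 0) = fun _ _ => 0 := by
  have := Lop_smul α 0 (fun _ _ => 0)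
  simpa using this

lemma Lop_sum (α : S1 → ℝ) (f : ℕ → S1 → ℝ → ℝ) (N : ℕ) :
    Lop α (fun ω x => ∑ n ∈ Finset.range N, f n ω x) =
      fun ω x => ∑ n ∈ Finset.range N, Lop α (f n) ω x := by
  induction N with
  | zero => simpa using Lop_zero α
  | succ N ih =>
    simp only [Finset.sum_range_succ]
    rw [Lop_add α (fun ω x => ∑ n ∈ Finset.range N, f n ω x) (f N), ih]

lemma Lop_tendsto (α : S1 → ℝ) (f : ℕ → S1 → ℝ → ℝ) (k : S1 → ℝ → ℝ)
    (h : ∀ ω x, Tendsto (fun n => f n ω x) atTop (𝓝 (k ω x))) (ω : S1) (x : ℝ) :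
    Tendsto (fun n => Lop α (f n) ω x) atTop (𝓝 (Lop α k ω x)) := by
  by_cases hx : x ∈ Set.Ioc (0:ℝ) 1
  · simp only [Lop_apply _ _ _ hx]
    refine Tendsto.div_const (tendsto_finsetSum _ fun j _ => ?_) _
    exact ((h _ _).div_const _).add ((h _ _).div_const _)
  · simp [Lop_supp _ _ _ hx]

lemma Lop_mono {α c A Λ} (H : AlphaHyp α c A Λ) {f g : S1 → ℝ → ℝ} (h : ∀ ω x, f ω x ≤ g ω x)
    (ω : S1) (x : ℝ) : Lop α f ω x ≤ Lop α g ω x := by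
  by_cases hx : x ∈ Set.Ioc (0:ℝ) 1
  · rw [Lop_apply _ _ _ hx, Lop_apply _ _ _ hx]
    refine div_le_div_of_nonneg_right (Finset.sum_le_sum fun k _ => ?_) (by norm_num)
    have D := DT_pos (H.pos (((lift ω + k) / 4 : ℝ) : S1)) (Sinv_spec (H.pos (((lift ω + k) / 4 : ℝ) : S1)) hx).1.le
    refine add_le_add (div_le_div_of_nonneg_right (h _ _) (by linarith))
      (div_le_div_of_nonneg_right (h _ _) (by norm_num))
  · simp [Lop_supp _ _ _ hx]

/-- fibre mass bound -/
def Mass (M : ℝ) (f : S1 → ℝ → ℝ) : Prop :=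
  ∀ ω, ∫⁻ x in Set.Ioc (0:ℝ) 1, ENNReal.ofReal (f ω x) ≤ ENNReal.ofReal M

lemma Reg.measurable_fib {A B f} (hf : Reg A B f) (hA0 : 0 < A) (hA : A < 1) (hB : 0 ≤ B) (ω : S1) :
    Measurable (f ω) := (hf.measurable hA0 hA hB).comp measurable_prodMk_left

lemma Mass.Lop {α c A Λ B M f} (H : AlphaHyp α c A Λ) (hB : 0 ≤ B) (hf : Reg A B f)
    (hM : Mass M f) : Mass M (Lop α f) := by
  intro ω
  have hc := H.c_pos
  have hΛ := H.Λ_nonneg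
  have hPr := hf.Pop H
  have hP : ∀ η, ∫⁻ x in Set.Ioc (0:ℝ) 1, ENNReal.ofReal (Pop α f η x) ≤ ENNReal.ofReal M := by
    intro η
    have := fiber_dual (H.pos η) (f η) (hf.nonneg η) (hf.measurable_fib H.A_pos H.A_lt hB η)
      (fun _ => 1) measurable_const
    simp only [mul_one] at this
    refine le_trans (le_of_eq ?_) (hM η)
    rw [this]
    refine setLIntegral_congr_fun measurableSet_Ioc fun x hx => ?_
    simp only [Pop, if_pos hx]
  have e : ∀ x, ENNReal.ofReal (_root_.Lop α f ω x) = (∑ k ∈ Finset.range 4,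
      ENNReal.ofReal (Pop α f (((lift ω + k) / 4 : ℝ) : S1) x)) * 4⁻¹ := by
    intro x
    unfold _root_.Lop Qop
    rw [ENNReal.ofReal_div_of_pos (by norm_num),
      ENNReal.ofReal_sum_of_nonneg (fun k _ => hPr.nonneg _ _), div_eq_mul_inv]
    norm_num
  have hm : ∀ η, Measurable (Pop α f η) := hPr.measurable_fib H.A_pos H.A_lt (by positivity)
  simp_rw [e]
  rw [lintegral_mul_const _ (by fun_prop), lintegral_finsetSum _ (by intro k _; fun_prop)]
  calc _ ≤ (∑ k ∈ Finset.range 4, ENNReal.ofReal M) * 4⁻¹ := by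
        gcongr with k _
        exact hP _
    _ = ENNReal.ofReal M := by
        simp only [Finset.sum_const, Finset.card_range, nsmul_eq_mul]
        rw [mul_comm, ← mul_assoc]
        push_cast
        rw [ENNReal.inv_mul_cancel (by norm_num) (by norm_num), one_mul]

lemma Mass.half {A B M f} (hM0 : 0 ≤ M) (hf : Reg A B f) (hM : Mass M f) (ω : S1) :
    f ω (1 / 2) / 2 ≤ M := by
  have h1 : ∫⁻ x in Set.Ioc (0:ℝ) (1 / 2), ENNReal.ofReal (f ω (1 / 2)) ≤ ENNReal.ofReal M := by
    refine le_trans ?_ (hM ω)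
    calc _ ≤ ∫⁻ x in Set.Ioc (0:ℝ) (1 / 2), ENNReal.ofReal (f ω x) := by
          refine setLIntegral_mono' measurableSet_Ioc fun x hx => ?_
          exact ENNReal.ofReal_le_ofReal (hf.anti ω x _ hx.1 hx.2 (by norm_num))
      _ ≤ _ := lintegral_mono_set (Set.Ioc_subset_Ioc_right (by norm_num))
  rw [setLIntegral_const, Real.volume_Ioc, ← ENNReal.ofReal_mul (hf.nonneg _ _),
    ENNReal.ofReal_le_ofReal_iff hM0] at h1
  linarith

lemma Bd.Lop {α c A Λ B M D f} (H : AlphaHyp α c A Λ) (hf : Reg A B f) (hM0 : 0 ≤ M)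
    (hM : Mass M f) (hD : M ≤ D * ((1 - A) / 3)) (hb : Bd A D f) : Bd A D (Lop α f) := by
  intro ω x hx
  have hA := H.A_lt
  have hD0 : 0 ≤ D := by
    by_contra h
    push Not at h
    nlinarith
  have hP : ∀ η, Pop α f η x ≤ D * x ^ (-A) := by
    intro η
    obtain ⟨h1, h2, h3⟩ := Sinv_spec (H.pos η) hx
    have hDT := DT_pos (H.pos η) h1.le
    have key := bound_key (H.pos η) (H.upper η) H.A_lt h1 h2
    simp only [Pop, if_pos hx]
    rw [h3] at key
    have r : f η ((x + 1) / 2) / 2 ≤ M := by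
      have := hf.anti η (1 / 2) ((x + 1) / 2) (by norm_num) (by linarith [hx.1]) (by linarith [hx.2])
      have := hM.half hM0 hf η
      linarith
    have l : f η (Sinv (α η) x) / DT (α η) (Sinv (α η) x) ≤
        D * (Sinv (α η) x ^ (-A) / DT (α η) (Sinv (α η) x)) := by
      rw [← mul_div_assoc]
      exact div_le_div_of_nonneg_right (hb η _ ⟨h1, by linarith⟩) (by linarith)
    have := mul_le_mul_of_nonneg_left key hD0
    linarith
  unfold _root_.Lop Qop
  rw [div_le_iff₀ (by norm_num)]
  calc _ ≤ ∑ k ∈ Finset.range 4, D * x ^ (-A) := Finset.sum_le_sum fun k _ => hP _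
    _ = _ := by simp; ring

/-- iterates of the transfer operator -/
def itL (α : S1 → ℝ) (f : S1 → ℝ → ℝ) : ℕ → S1 → ℝ → ℝ
  | 0 => f
  | n + 1 => Lop α (itL α f n)

/-- Cesaro averages -/
def ces (α : S1 → ℝ) (f : S1 → ℝ → ℝ) (N : ℕ) : S1 → ℝ → ℝ := fun ω x =>
  ((N:ℝ) + 1)⁻¹ * ∑ n ∈ Finset.range (N + 1), itL α f n ω x

lemma itL_props {α c A Λ B M D f} (H : AlphaHyp α c A Λ) (hB : 4 / c * Λ ≤ B) (hf : Reg A B f)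
    (hM0 : 0 ≤ M) (hM : Mass M f) (hD : M ≤ D * ((1 - A) / 3)) (hb : Bd A D f) (n : ℕ) :
    Reg A B (itL α f n) ∧ Mass M (itL α f n) ∧ Bd A D (itL α f n) := by
  have hB0 : 0 ≤ B := le_trans (mul_nonneg (div_nonneg (by norm_num) H.c_pos.le) H.Λ_nonneg) hB
  induction n with
  | zero => exact ⟨hf, hM, hb⟩
  | succ n ih => exact ⟨ih.1.Lop H hB, ih.2.1.Lop H hB0 ih.1, ih.2.2.Lop H ih.1 hM0 ih.2.1 hD⟩

lemma Reg.sum {A B} (f : ℕ → S1 → ℝ → ℝ) (hf : ∀ n, Reg A B (f n)) (N : ℕ) :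
    Reg A B (fun ω x => ∑ n ∈ Finset.range N, f n ω x) := by
  induction N with
  | zero => simpa using Reg.zero
  | succ N ih =>
    simp only [Finset.sum_range_succ]
    exact ih.add (hf N)

lemma ces_props {α c A Λ B M D f} (H : AlphaHyp α c A Λ) (hB : 4 / c * Λ ≤ B) (hf : Reg A B f)
    (hM0 : 0 ≤ M) (hM : Mass M f) (hD : M ≤ D * ((1 - A) / 3)) (hb : Bd A D f) (N : ℕ) :
    Reg A B (ces α f N) ∧ Bd A D (ces α f N) := by
  have h := itL_props H hB hf hM0 hM hD hb
  refine ⟨(Reg.sum _ (fun n => (h n).1) (N + 1)).smul (by positivity), ?_⟩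
  intro ω x hx
  unfold ces
  rw [inv_mul_le_iff₀ (by positivity)]
  calc _ ≤ ∑ n ∈ Finset.range (N + 1), D * x ^ (-A) :=
        Finset.sum_le_sum fun n _ => (h n).2.2 ω x hx
    _ = _ := by simp

lemma ces_Lop (α : S1 → ℝ) (f : S1 → ℝ → ℝ) (N : ℕ) (ω : S1) (x : ℝ) :
    Lop α (ces α f N) ω x =
      ces α f N ω x + ((N:ℝ) + 1)⁻¹ * (itL α f (N + 1) ω x - f ω x) := by
  unfold ces
  rw [Lop_smul α _ (fun ω x => ∑ n ∈ Finset.range (N + 1), itL α f n ω x), Lop_sum]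
  simp only
  rw [← mul_add]
  congr 1
  have := Finset.sum_range_succ' (fun n => itL α f n ω x) (N + 1)
  rw [Finset.sum_range_succ] at this
  simp only [itL] at this ⊢
  linarith

lemma lintegral_bd_ne_top {A D : ℝ} (hA : A < 1) :
    ∫⁻ z : S1 × ℝ, ENNReal.ofReal (D * z.2 ^ (-A)) ∂Leb ≠ ⊤ := by
  have h := (intervalIntegral.intervalIntegrable_rpow' (a := 0) (b := 1) (r := -A)
    (by linarith)).const_mul D
  rw [intervalIntegrable_iff_integrableOn_Ioc_of_le (by norm_num)] at h
  have h2 := h.lintegral_lt_top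
  rw [Leb_eq, lintegral_prod _ (by fun_prop)]
  simp only [lintegral_const, measure_univ, mul_one]
  exact h2.ne

lemma ofReal_le_bd {A B D f} (hf : Reg A B f) (hb : Bd A D f) (z : S1 × ℝ) :
    ENNReal.ofReal (f z.1 z.2) ≤ ENNReal.ofReal (D * z.2 ^ (-A)) := by
  by_cases hx : z.2 ∈ Set.Ioc (0:ℝ) 1
  · exact ENNReal.ofReal_le_ofReal (hb _ _ hx)
  · rw [hf.supp _ _ hx]; simp

lemma fixed_limit {α c A Λ B M D f} (H : AlphaHyp α c A Λ) (hB : 4 / c * Λ ≤ B) (hf : Reg A B f)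
    (hM0 : 0 ≤ M) (hM : Mass M f) (hD : M ≤ D * ((1 - A) / 3)) (hb : Bd A D f) :
    ∃ k, Reg A B k ∧ Bd A D k ∧ Lop α k = k ∧ ∀ E : Set (S1 × ℝ), MeasurableSet E →
      Tskew α ⁻¹' E = E →
      ∫⁻ z in E, ENNReal.ofReal (k z.1 z.2) ∂Leb = ∫⁻ z in E, ENNReal.ofReal (f z.1 z.2) ∂Leb := by
  have hB0 : 0 ≤ B := le_trans (mul_nonneg (div_nonneg (by norm_num) H.c_pos.le) H.Λ_nonneg) hB
  have hc := ces_props H hB hf hM0 hM hD hb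
  have hi := itL_props H hB hf hM0 hM hD hb
  obtain ⟨k, hk, hkb, φ, hφ, hlim⟩ := compact_seq H.A_pos H.A_lt hB0 (ces α f)
    (fun n => (hc n).1) (fun n => (hc n).2)
  refine ⟨k, hk, hkb, ?_, ?_⟩
  · funext ω x
    by_cases hx : x ∈ Set.Ioc (0:ℝ) 1
    swap
    · rw [Lop_supp _ _ _ hx, hk.supp _ _ hx]
    have t1 := Lop_tendsto α _ _ hlim ω x
    have t2 : Tendsto (fun n => Lop α (ces α f (φ n)) ω x) atTop (𝓝 (k ω x + 0)) := by
      simp_rw [ces_Lop]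
      refine (hlim ω x).add ?_
      have t3 : Tendsto (fun N : ℕ => ((N:ℝ) + 1)⁻¹ * (itL α f (N + 1) ω x - f ω x))
          atTop (𝓝 0) := by
        have t4 : Tendsto (fun N : ℕ => ((N:ℝ) + 1)⁻¹ * (D * x ^ (-A))) atTop (𝓝 0) := by
          have := (tendsto_one_div_add_atTop_nhds_zero_nat (𝕜 := ℝ)).mul_const (D * x ^ (-A))
          simpa using this
        refine squeeze_zero_norm (fun N => ?_) t4
        rw [norm_mul, Real.norm_of_nonneg (by positivity)]
        refine mul_le_mul_of_nonneg_left ?_ (by positivity)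
        rw [Real.norm_eq_abs, abs_le]
        have b1 := (hi (N + 1)).2.2 ω x hx
        have b2 := (hi (N + 1)).1.nonneg ω x
        have b3 := hb ω x hx
        have b4 := hf.nonneg ω x
        constructor <;> linarith
      exact t3.comp hφ.tendsto_atTop
    rw [add_zero] at t2
    exact tendsto_nhds_unique t1 t2
  · intro E hE hTE
    have hit : ∀ n, ∫⁻ z in E, ENNReal.ofReal (itL α f n z.1 z.2) ∂Leb =
        ∫⁻ z in E, ENNReal.ofReal (f z.1 z.2) ∂Leb := by
      intro n
      induction n with
      | zero => rfl
      | succ n ih =>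
        rw [← ih]
        have := map_withDensity H hB0 (hi n).1 hE
        rw [hTE] at this
        exact this.symm
    have hces : ∀ N, ∫⁻ z in E, ENNReal.ofReal (ces α f N z.1 z.2) ∂Leb =
        ∫⁻ z in E, ENNReal.ofReal (f z.1 z.2) ∂Leb := by
      intro N
      have hm : ∀ n, Measurable (fun z : S1 × ℝ => itL α f n z.1 z.2) := fun n =>
        (hi n).1.measurable H.A_pos H.A_lt hB0
      have e : ∀ z : S1 × ℝ, ENNReal.ofReal (ces α f N z.1 z.2) = ENNReal.ofReal (((N:ℝ) + 1)⁻¹) *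
          ∑ n ∈ Finset.range (N + 1), ENNReal.ofReal (itL α f n z.1 z.2) := by
        intro z
        unfold ces
        rw [ENNReal.ofReal_mul (by positivity),
          ENNReal.ofReal_sum_of_nonneg (fun n _ => (hi n).1.nonneg _ _)]
      simp_rw [e]
      rw [lintegral_const_mul _ (by fun_prop), lintegral_finsetSum _ (by intro n _; fun_prop)]
      simp_rw [hit]
      simp only [Finset.sum_const, Finset.card_range, nsmul_eq_mul]
      rw [← mul_assoc, ENNReal.ofReal_inv_of_pos (by positivity)]
      have : ENNReal.ofReal ((N:ℝ) + 1) = ((N + 1 : ℕ) : ℝ≥0∞) := by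
        rw [← ENNReal.ofReal_natCast]; push_cast; rfl
      rw [this, ENNReal.inv_mul_cancel (by simp) (by exact ENNReal.natCast_ne_top _), one_mul]
    have hdom := tendsto_lintegral_of_dominated_convergence (μ := Leb.restrict E)
      (F := fun n (z : S1 × ℝ) => ENNReal.ofReal (ces α f (φ n) z.1 z.2))
      (f := fun z => ENNReal.ofReal (k z.1 z.2))
      (fun z => ENNReal.ofReal (D * z.2 ^ (-A)))
      (fun n => ((hc (φ n)).1.measurable H.A_pos H.A_lt hB0).ennreal_ofReal)
      (fun n => Eventually.of_forall fun z => ofReal_le_bd (hc _).1 (hc _).2 z)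
      (ne_top_of_le_ne_top (lintegral_bd_ne_top H.A_lt) (setLIntegral_le_lintegral _ _))
      (Eventually.of_forall fun z => ENNReal.tendsto_ofReal (hlim z.1 z.2))
    simp_rw [hces] at hdom
    exact tendsto_nhds_unique hdom tendsto_const_nhds

lemma Fm_coe (t : ℝ) : Fm (t : S1) = ((4 * t : ℝ) : S1) := by
  unfold Fm
  rw [← AddCircle.coe_nsmul]
  simp

lemma Fm_iter (n : ℕ) (t : ℝ) : Fm^[n] (t : S1) = ((4 ^ n * t : ℝ) : S1) := by
  induction n generalizing t with
  | zero => simp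
  | succ n ih =>
    rw [Function.iterate_succ_apply, Fm_coe, ih]
    congr 1; ring

lemma Ta_mem {a y : ℝ} (ha : 0 < a) (hy : y ∈ Set.Ioc (0:ℝ) 1) : Ta a y ∈ Set.Ioc (0:ℝ) 1 := by
  rcases le_or_gt y (1 / 2) with h | h
  · rw [Ta_left h]; exact lb_mem ha ⟨hy.1, h⟩
  · rw [Ta_right h]; constructor <;> linarith [hy.1, hy.2]

lemma Pop_nonneg {α c A Λ} (H : AlphaHyp α c A Λ) {d : S1 → ℝ → ℝ} (h0 : ∀ ω x, 0 ≤ d ω x)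
    (ω : S1) (x : ℝ) : 0 ≤ Pop α d ω x := by
  unfold Pop
  split_ifs with hx
  · have D := DT_pos (H.pos ω) (Sinv_spec (H.pos ω) hx).1.le
    have := div_nonneg (h0 ω (Sinv (α ω) x)) (by linarith : 0 ≤ DT (α ω) (Sinv (α ω) x))
    have := h0 ω ((x + 1) / 2)
    linarith
  · exact le_rfl

lemma zero_back {α c A Λ} (H : AlphaHyp α c A Λ) {d : S1 → ℝ → ℝ} (h0 : ∀ ω x, 0 ≤ d ω x)
    (hL : Lop α d = d) {ω : S1} {y : ℝ} (hy : y ∈ Set.Ioc (0:ℝ) 1)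
    (h : d (Fm ω) (Ta (α ω) y) = 0) : d ω y = 0 := by
  have hx := Ta_mem (H.pos ω) hy
  rw [← hL] at h
  have e : Fm ω = ((4 * lift ω : ℝ) : S1) := by rw [← Fm_coe, coe_lift]
  rw [e] at h
  unfold Lop at h
  rw [Qop_coe, div_eq_zero_iff] at h
  have h := h.resolve_right (by norm_num)
  rw [Finset.sum_eq_zero_iff_of_nonneg (fun k _ => Pop_nonneg H h0 _ _)] at h
  have h := h 0 (by simp)
  have e2 : ((4 * lift ω + ((0:ℕ):ℝ)) / 4 : ℝ) = lift ω := by push_cast; ring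
  rw [e2, coe_lift] at h
  simp only [Pop, if_pos hx] at h
  have hS := Sinv_spec (H.pos ω) hx
  have D := DT_pos (H.pos ω) hS.1.le
  have n1 := div_nonneg (h0 ω (Sinv (α ω) (Ta (α ω) y)))
    (by linarith : 0 ≤ DT (α ω) (Sinv (α ω) (Ta (α ω) y)))
  have n2 := h0 ω ((Ta (α ω) y + 1) / 2)
  rcases le_or_gt y (1 / 2) with h' | h'
  · have h1 : d ω (Sinv (α ω) (Ta (α ω) y)) / DT (α ω) (Sinv (α ω) (Ta (α ω) y)) = 0 := by linarith
    rw [div_eq_zero_iff] at h1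
    have h1 := h1.resolve_right (by linarith)
    rwa [Ta_left h', Sinv_lb (H.pos ω) ⟨hy.1, h'⟩] at h1
  · have h1 : d ω ((Ta (α ω) y + 1) / 2) = 0 := by linarith
    have e3 : (Ta (α ω) y + 1) / 2 = y := by rw [Ta_right h']; ring
    rwa [e3] at h1

/-- preimages of zeros at depth `n` are `s`-dense in the fibre -/
def RR (Z : S1 → ℝ → Prop) (n : ℕ) (s : ℝ) : Prop :=
  ∀ ω x0, x0 ∈ Set.Ioc (0:ℝ) 1 → Z (Fm^[n] ω) x0 → ∀ p ∈ Set.Ioc (0:ℝ) 1,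
    ∃ y ∈ Set.Ioc (0:ℝ) 1, |y - p| < s ∧ Z ω y

lemma lb_expand {a A y p : ℝ} (ha : 0 < a) (haA : a ≤ A) (hp : 0 < p) (hpy : p ≤ y)
    (hy : y ≤ 1 / 2) : lb A (y - p) ≤ lb a y - lb a p := by
  unfold lb
  have hv : 0 ≤ y - p := by linarith
  have h1 : (2 * (y - p)) ^ A ≤ (2 * y) ^ a := by
    rcases hv.eq_or_lt with h | h
    · rw [← h]
      simp only [mul_zero]
      rw [Real.zero_rpow (by linarith)]
      exact Real.rpow_nonneg (by linarith) _
    · calc (2 * (y - p)) ^ A ≤ (2 * (y - p)) ^ a :=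
            Real.rpow_le_rpow_of_exponent_ge (by linarith) (by linarith) haA
        _ ≤ (2 * y) ^ a := Real.rpow_le_rpow (by linarith) (by linarith) ha.le
  have h2 : (2 * p) ^ a ≤ (2 * y) ^ a := Real.rpow_le_rpow (by linarith) (by linarith) ha.le
  nlinarith

lemma RR_step {α c A Λ} (H : AlphaHyp α c A Λ) {Z : S1 → ℝ → Prop}
    (hZ : ∀ ω y, y ∈ Set.Ioc (0:ℝ) 1 → Z (Fm ω) (Ta (α ω) y) → Z ω y) {n : ℕ} {s : ℝ} (hs : 0 < s)
    (h : RR Z n (lb A s)) : RR Z (n + 1) s := by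
  intro ω x0 hx0 hz p hp
  rw [Function.iterate_succ_apply] at hz
  obtain ⟨x, hx, hxq, hxz⟩ := h _ x0 hx0 hz (Ta (α ω) p) (Ta_mem (H.pos ω) hp)
  rcases le_or_gt p (1 / 2) with hp2 | hp2
  · obtain ⟨y1, y2, y3⟩ := Sinv_spec (H.pos ω) hx
    set y := Sinv (α ω) x
    refine ⟨y, ⟨y1, by linarith⟩, ?_, hZ _ _ ⟨y1, by linarith⟩ ?_⟩
    · rw [Ta_left hp2, ← y3] at hxq
      by_contra hcon
      push Not at hcon
      have m := (lb_le_iff H.A_pos hs.le (abs_nonneg (y - p))).2 hcon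
      have : lb A |y - p| ≤ |lb (α ω) y - lb (α ω) p| := by
        rcases le_total p y with h | h
        · rw [abs_of_nonneg (by linarith : 0 ≤ y - p)]
          exact (lb_expand (H.pos ω) (H.upper ω) hp.1 h y2).trans (le_abs_self _)
        · rw [abs_of_nonpos (by linarith : y - p ≤ 0), abs_sub_comm, neg_sub]
          exact (lb_expand (H.pos ω) (H.upper ω) y1 h hp2).trans (le_abs_self _)
      linarith
    · rw [Ta_left y2, y3]; exact hxz
  · have hy : (x + 1) / 2 ∈ Set.Ioc (0:ℝ) 1 := right_mem hx
    have hy2 : 1 / 2 < (x + 1) / 2 := by linarith [hx.1]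
    refine ⟨(x + 1) / 2, hy, ?_, hZ _ _ hy ?_⟩
    · rcases le_or_gt s (1 / 2) with h2 | h2
      · have : lb A s ≤ 2 * s := by
          unfold lb
          have : (2 * s) ^ A ≤ 1 := Real.rpow_le_one (by linarith) (by linarith) H.A_pos.le
          nlinarith
        rw [Ta_right hp2] at hxq
        rw [abs_lt] at hxq ⊢
        constructor <;> linarith [hxq.1, hxq.2]
      · rw [abs_lt]
        constructor <;> linarith [hy.2, hp.2]
    · rw [Ta_right hy2]
      have : 2 * ((x + 1) / 2) - 1 = x := by ring
      rw [this]; exact hxz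

lemma lb_ge {A s : ℝ} (hs : 0 ≤ s) : s ≤ lb A s := by
  unfold lb
  have : 0 ≤ (2 * s) ^ A := Real.rpow_nonneg (by linarith) _
  nlinarith

lemma RR_exists {α c A Λ} (H : AlphaHyp α c A Λ) {Z : S1 → ℝ → Prop}
    (hZ : ∀ ω y, y ∈ Set.Ioc (0:ℝ) 1 → Z (Fm ω) (Ta (α ω) y) → Z ω y) {s : ℝ} (hs : 0 < s) :
    ∃ n0, ∀ n ≥ n0, RR Z n s := by
  have hmono : ∀ n s s', s ≤ s' → RR Z n s → RR Z n s' := by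
    intro n s s' h hR ω x0 hx0 hz p hp
    obtain ⟨y, h1, h2, h3⟩ := hR ω x0 hx0 hz p hp
    exact ⟨y, h1, h2.trans_le h, h3⟩
  have hA := H.A_pos
  set δ := (2 * s) ^ A with hδ
  have hδ0 : 0 < δ := Real.rpow_pos_of_pos (by linarith) _
  have key : ∃ n0, RR Z n0 s := by
    have grow : ∀ n : ℕ, ∀ u, s ≤ u → 2 ≤ u * (1 + δ) ^ n → RR Z n u := by
      intro n
      induction n with
      | zero =>
        intro u hu h1 ω x0 hx0 hz p hp
        refine ⟨x0, hx0, ?_, hz⟩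
        simp at h1
        rw [abs_lt]
        constructor <;> linarith [hx0.1, hx0.2, hp.1, hp.2]
      | succ n ih =>
        intro u hu h1
        have hu0 : 0 < u := by linarith
        apply RR_step H hZ hu0
        have hd : δ ≤ (2 * u) ^ A := Real.rpow_le_rpow (by linarith) (by linarith) hA.le
        have := ih (u * (1 + δ)) (by nlinarith) (by rw [pow_succ] at h1; linarith)
        refine hmono _ _ _ ?_ this
        unfold lb
        nlinarith
    obtain ⟨n, hn⟩ := pow_unbounded_of_one_lt (2 / s) (by linarith : 1 < 1 + δ)
    refine ⟨n, grow n s le_rfl ?_⟩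
    rw [div_lt_iff₀ hs] at hn
    linarith
  obtain ⟨n0, h0⟩ := key
  refine ⟨n0, fun n hn => ?_⟩
  induction n, hn using Nat.le_induction with
  | base => exact h0
  | succ n _ ih => exact RR_step H hZ hs (hmono _ _ _ (lb_ge hs.le) ih)

lemma zero_everywhere {α c A Λ} (H : AlphaHyp α c A Λ) {d : S1 → ℝ → ℝ} (h0 : ∀ ω x, 0 ≤ d ω x)
    (hL : Lop α d = d)
    (hcont : ContinuousOn (fun z : S1 × ℝ => d z.1 z.2) (Set.univ ×ˢ Set.Ioc (0:ℝ) 1))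
    {ω0 : S1} {x0 : ℝ} (hx0 : x0 ∈ Set.Ioc (0:ℝ) 1) (hd : d ω0 x0 = 0) (ω : S1) {p : ℝ}
    (hp : p ∈ Set.Ioc (0:ℝ) 1) : d ω p = 0 := by
  have hZ : ∀ ω y, y ∈ Set.Ioc (0:ℝ) 1 → d (Fm ω) (Ta (α ω) y) = 0 → d ω y = 0 :=
    fun ω y hy h => zero_back H h0 hL hy h
  have step : ∀ m : ℕ, ∃ (t y : ℝ), |t - lift ω| ≤ 1 / ((m:ℝ) + 1) ∧ y ∈ Set.Ioc (0:ℝ) 1 ∧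
      |y - p| ≤ 1 / ((m:ℝ) + 1) ∧ d (t : S1) y = 0 := by
    intro m
    have hm : 0 < 1 / ((m:ℝ) + 1) := by positivity
    obtain ⟨n0, hn0⟩ := RR_exists (Z := fun ω y => d ω y = 0) H hZ hm
    set n := max n0 (m + 1)
    have hR := hn0 n (le_max_left _ _)
    have h4 : (m:ℝ) + 1 ≤ 4 ^ n := by
      have h1 : n < 4 ^ n := Nat.lt_pow_self (by norm_num)
      have h2 : m + 1 ≤ n := le_max_right _ _
      have : m + 1 ≤ 4 ^ n := by omega
      exact_mod_cast this
    have h4p : (0:ℝ) < 4 ^ n := by positivity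
    set j : ℤ := ⌊4 ^ n * lift ω - lift ω0⌋
    set t : ℝ := (lift ω0 + j) / 4 ^ n
    have ht : Fm^[n] (t : S1) = ω0 := by
      rw [Fm_iter]
      have : (4 ^ n * t : ℝ) = lift ω0 + j := by
        simp only [t]; field_simp
      rw [this, AddCircle.coe_add, coe_lift]
      have : ((j : ℝ) : S1) = 0 := by
        rw [AddCircle.coe_eq_zero_iff]; exact ⟨j, by simp⟩
      rw [this, add_zero]
    obtain ⟨y, hy, hyp, hyz⟩ := hR (t : S1) x0 hx0 (by rw [ht]; exact hd) p hp
    refine ⟨t, y, ?_, hy, hyp.le, hyz⟩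
    have f1 := Int.floor_le (4 ^ n * lift ω - lift ω0)
    have f2 := Int.lt_floor_add_one (4 ^ n * lift ω - lift ω0)
    have e : t - lift ω = (lift ω0 + j - 4 ^ n * lift ω) / 4 ^ n := by
      simp only [t]; field_simp
    rw [e, abs_div, abs_of_pos h4p]
    refine div_le_div₀ (by norm_num) ?_ (by positivity) h4
    rw [abs_le]
    constructor <;> linarith
  choose t y ht hy hyp hz using step
  have lim0 := tendsto_one_div_add_atTop_nhds_zero_nat (𝕜 := ℝ)
  have l1 : Tendsto t atTop (𝓝 (lift ω)) := by
    rw [tendsto_iff_norm_sub_tendsto_zero]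
    exact squeeze_zero (fun _ => norm_nonneg _) ht lim0
  have l2 : Tendsto y atTop (𝓝 p) := by
    rw [tendsto_iff_norm_sub_tendsto_zero]
    exact squeeze_zero (fun _ => norm_nonneg _) hyp lim0
  have l3 : Tendsto (fun m => ((t m : ℝ) : S1)) atTop (𝓝 ω) := by
    have := (AddCircle.continuous_mk' (1:ℝ)).tendsto (lift ω)
    have e : (QuotientAddGroup.mk' (AddSubgroup.zmultiples (1:ℝ))) (lift ω) = ω := coe_lift ω
    rw [e] at this
    exact this.comp l1
  have l4 : Tendsto (fun m => (((t m : ℝ) : S1), y m)) atTop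
      (𝓝[Set.univ ×ˢ Set.Ioc (0:ℝ) 1] (ω, p)) :=
    tendsto_nhdsWithin_iff.2 ⟨l3.prodMk_nhds l2, Eventually.of_forall fun m => ⟨trivial, hy m⟩⟩
  have l5 := (hcont (ω, p) ⟨trivial, hp⟩).tendsto.comp l4
  have e : ((fun z : S1 × ℝ => d z.1 z.2) ∘ fun m => (((t m : ℝ) : S1), y m)) = fun _ => 0 := by
    funext m; exact hz m
  rw [e] at l5
  exact (tendsto_nhds_unique l5 tendsto_const_nhds)

lemma Leb_restrict : Leb = ((volume : Measure S1).prod (volume : Measure ℝ)).restrict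
    (Set.univ ×ˢ Set.Ioc (0:ℝ) 1) := by
  rw [Leb_eq, ← Measure.prod_restrict, Measure.restrict_univ]

lemma Reg.eq_of_ae {A B f g} (hA0 : 0 < A) (hA : A < 1) (hB : 0 ≤ B) (hf : Reg A B f)
    (hg : Reg A B g) (h : ∀ᵐ z ∂Leb, f z.1 z.2 = g z.1 z.2) : f = g := by
  rw [Leb_restrict] at h
  have := Measure.eqOn_of_ae_eq (f := fun z : S1 × ℝ => f z.1 z.2)
    (g := fun z : S1 × ℝ => g z.1 z.2) h (hf.continuousOn hA0 hA hB) (hg.continuousOn hA0 hA hB) (by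
      rw [interior_prod_eq, closure_prod_eq, interior_univ, closure_univ, interior_Ioc,
        closure_Ioo (by norm_num)]
      exact Set.prod_mono le_rfl Set.Ioc_subset_Icc_self)
  funext ω x
  by_cases hx : x ∈ Set.Ioc (0:ℝ) 1
  · exact this (x := (ω, x)) ⟨trivial, hx⟩
  · rw [hf.supp _ _ hx, hg.supp _ _ hx]

lemma Reg.eq_of_le {A B f g} (hA0 : 0 < A) (hA : A < 1) (hB : 0 ≤ B) (hf : Reg A B f)
    (hg : Reg A B g) (hle : ∀ ω x, f ω x ≤ g ω x)
    (hfin : ∫⁻ z, ENNReal.ofReal (f z.1 z.2) ∂Leb ≠ ⊤)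
    (hint : ∫⁻ z, ENNReal.ofReal (g z.1 z.2) ∂Leb ≤ ∫⁻ z, ENNReal.ofReal (f z.1 z.2) ∂Leb) :
    f = g := by
  refine hf.eq_of_ae hA0 hA hB hg ?_
  have hgm := hg.measurable hA0 hA hB
  have := ae_eq_of_ae_le_of_lintegral_le (μ := Leb)
    (Eventually.of_forall fun z : S1 × ℝ => ENNReal.ofReal_le_ofReal (hle z.1 z.2)) hfin
    hgm.ennreal_ofReal.aemeasurable hint
  filter_upwards [this] with z hz
  rwa [ENNReal.ofReal_eq_ofReal_iff (hf.nonneg _ _) (hg.nonneg _ _)] at hz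

lemma fixed_aux {α c A Λ B k w} (H : AlphaHyp α c A Λ) (hB : 0 ≤ B) (hk : Reg A B k)
    (hw : Reg A B w) (Lk : Lop α k = k) (Lw : Lop α w = w) (hle : ∀ ω x, w ω x ≤ k ω x)
    (h1 : w 0 1 = k 0 1) : k = w := by
  have Ld : Lop α (fun ω x => k ω x - w ω x) = fun ω x => k ω x - w ω x := by
    have e := Lop_add α (fun ω x => k ω x - w ω x) w
    simp only [sub_add_cancel] at e
    have e2 : Lop α (fun ω x => k ω x) = k := Lk
    rw [e2, Lw] at e
    funext ω x
    have := congrFun (congrFun e ω) x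
    linarith
  funext ω x
  by_cases hx : x ∈ Set.Ioc (0:ℝ) 1
  · have := zero_everywhere H (d := fun ω x => k ω x - w ω x)
      (fun ω x => sub_nonneg.2 (hle ω x)) Ld
      ((hk.continuousOn H.A_pos H.A_lt hB).sub (hw.continuousOn H.A_pos H.A_lt hB))
      (ω0 := 0) (x0 := 1) (by simp) (by rw [h1]; simp) ω hx
    linarith
  · rw [hk.supp _ _ hx, hw.supp _ _ hx]

lemma fixed_unique {α c A Λ B k1 k2} (H : AlphaHyp α c A Λ) (hB : 4 / c * Λ ≤ B) (h1 : Reg A B k1)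
    (h2 : Reg A B k2) (L1 : Lop α k1 = k1) (L2 : Lop α k2 = k2)
    (hfin : ∫⁻ z, ENNReal.ofReal (k1 z.1 z.2) ∂Leb ≠ ⊤)
    (hint : ∫⁻ z, ENNReal.ofReal (k1 z.1 z.2) ∂Leb = ∫⁻ z, ENNReal.ofReal (k2 z.1 z.2) ∂Leb) :
    k1 = k2 := by
  have hB0 : 0 ≤ B := le_trans (mul_nonneg (div_nonneg (by norm_num) H.c_pos.le) H.Λ_nonneg) hB
  have hA0 := H.A_pos
  have hA := H.A_lt
  have hw := h1.min h2
  have hLw := hw.Lop H hB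
  set w : S1 → ℝ → ℝ := fun ω x => min (k1 ω x) (k2 ω x) with hwdef
  have hw1 : ∀ ω x, w ω x ≤ k1 ω x := fun ω x => min_le_left _ _
  have hw2 : ∀ ω x, w ω x ≤ k2 ω x := fun ω x => min_le_right _ _
  have hle : ∀ ω x, Lop α w ω x ≤ w ω x := by
    intro ω x
    refine le_min ?_ ?_
    · have := Lop_mono H hw1 ω x
      rwa [L1] at this
    · have := Lop_mono H hw2 ω x
      rwa [L2] at this
  have hI : ∫⁻ z, ENNReal.ofReal (w z.1 z.2) ∂Leb =
      ∫⁻ z, ENNReal.ofReal (Lop α w z.1 z.2) ∂Leb := by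
    simpa using map_withDensity H hB0 hw MeasurableSet.univ
  have hwfin : ∫⁻ z, ENNReal.ofReal (w z.1 z.2) ∂Leb ≠ ⊤ :=
    ne_top_of_le_ne_top hfin (lintegral_mono fun z => ENNReal.ofReal_le_ofReal (hw1 _ _))
  have Lw : Lop α w = w := hLw.eq_of_le hA0 hA hB0 hw hle (by rwa [← hI]) hI.le
  rcases le_total (k1 0 1) (k2 0 1) with h | h
  · have e := fixed_aux H hB0 h1 hw L1 Lw hw1 (min_eq_left h)
    refine h1.eq_of_le hA0 hA hB0 h2 (fun ω x => ?_) hfin hint.ge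
    rw [e]; exact hw2 ω x
  · have e := fixed_aux H hB0 h2 hw L2 Lw hw2 (min_eq_right h)
    refine (h2.eq_of_le hA0 hA hB0 h1 (fun ω x => ?_) (by rwa [← hint]) hint.le).symm
    rw [e]; exact hw1 ω x

lemma Mass.of_le {M f} (hle : ∀ ω x, x ∈ Set.Ioc (0:ℝ) 1 → f ω x ≤ M) : Mass M f := by
  intro ω
  calc _ ≤ ∫⁻ x in Set.Ioc (0:ℝ) 1, ENNReal.ofReal M :=
        setLIntegral_mono' measurableSet_Ioc fun x hx => ENNReal.ofReal_le_ofReal (hle ω x hx)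
    _ = _ := by simp

lemma Bd.of_le {A M f} (hA0 : 0 < A) (hA : A < 1) (hM : 0 ≤ M)
    (hle : ∀ ω x, x ∈ Set.Ioc (0:ℝ) 1 → f ω x ≤ M) : Bd A (3 * M / (1 - A)) f := by
  intro ω x hx
  have h1 : 1 ≤ x ^ (-A) := Real.one_le_rpow_of_pos_of_le_one_of_nonpos hx.1 hx.2 (by linarith)
  have h2 : M ≤ 3 * M / (1 - A) := by
    rw [le_div_iff₀ (by linarith)]; nlinarith
  have := hle ω x hx
  nlinarith

/-- fixed limit for bounded cone functions -/
lemma fixed_limit' {α c A Λ B M f} (H : AlphaHyp α c A Λ) (hB : 4 / c * Λ ≤ B) (hf : Reg A B f)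
    (hM0 : 0 ≤ M) (hle : ∀ ω x, x ∈ Set.Ioc (0:ℝ) 1 → f ω x ≤ M) :
    ∃ k, Reg A B k ∧ Lop α k = k ∧ ∀ E : Set (S1 × ℝ), MeasurableSet E →
      Tskew α ⁻¹' E = E →
      ∫⁻ z in E, ENNReal.ofReal (k z.1 z.2) ∂Leb = ∫⁻ z in E, ENNReal.ofReal (f z.1 z.2) ∂Leb := by
  have hA := H.A_lt
  obtain ⟨k, h1, _, h2, h3⟩ := fixed_limit H hB hf hM0 (Mass.of_le hle) (D := 3 * M / (1 - A)) (by
    have : (1 - A) ≠ 0 := by linarith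
    apply le_of_eq; field_simp) (Bd.of_le H.A_pos H.A_lt hM0 hle)
  exact ⟨k, h1, h2, h3⟩

lemma lintegral_le_of_le {A B M f} (hf : Reg A B f)
    (hle : ∀ ω x, x ∈ Set.Ioc (0:ℝ) 1 → f ω x ≤ M) :
    ∫⁻ z, ENNReal.ofReal (f z.1 z.2) ∂Leb ≤ ENNReal.ofReal M := by
  calc _ ≤ ∫⁻ z : S1 × ℝ, ENNReal.ofReal M ∂Leb := by
        refine lintegral_mono fun z => ?_
        by_cases hx : z.2 ∈ Set.Ioc (0:ℝ) 1
        · exact ENNReal.ofReal_le_ofReal (hle _ _ hx)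
        · simp [hf.supp _ _ hx]
    _ = _ := by simp

lemma Leb_ae_mem : ∀ᵐ z ∂Leb, z.2 ∈ Set.Ioc (0:ℝ) 1 := by
  rw [Leb_restrict]
  filter_upwards [ae_restrict_mem (MeasurableSet.univ.prod measurableSet_Ioc)] with z hz
  exact hz.2

/-- the constant density -/
def one1 : S1 → ℝ → ℝ := fun _ x => open Classical in if x ∈ Set.Ioc (0:ℝ) 1 then 1 else 0

lemma reg_one1 {A B : ℝ} (hA0 : 0 < A) (hB : 0 ≤ B) : Reg A B one1 where
  supp ω x hx := by simp only [one1, if_neg hx]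
  nonneg ω x := by unfold one1; split_ifs <;> norm_num
  anti ω x y h1 h2 h3 := by
    simp only [one1]
    have hx : x ∈ Set.Ioc (0:ℝ) 1 := ⟨h1, by linarith⟩
    have hy : y ∈ Set.Ioc (0:ℝ) 1 := ⟨by linarith, h3⟩
    rw [if_pos hx, if_pos hy]
  mono ω x y h1 h2 h3 := by
    simp only [one1]
    have hx : x ∈ Set.Ioc (0:ℝ) 1 := ⟨h1, by linarith⟩
    have hy : y ∈ Set.Ioc (0:ℝ) 1 := ⟨by linarith, h3⟩
    rw [if_pos hx, if_pos hy, mul_one, mul_one]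
    exact Real.rpow_le_rpow h1.le h2 (by linarith)
  loglip s t x := by
    have : 1 ≤ exp (B * |s - t|) := Real.one_le_exp (by positivity)
    unfold one1
    split_ifs <;> simp [this]

lemma exists_h {α c A Λ B} (H : AlphaHyp α c A Λ) (hB : 4 / c * Λ ≤ B) :
    ∃ h, Reg A B h ∧ Lop α h = h ∧ ∫⁻ z, ENNReal.ofReal (h z.1 z.2) ∂Leb = 1 ∧
      ∀ ω x, x ∈ Set.Ioc (0:ℝ) 1 → 0 < h ω x := by
  have hB0 : 0 ≤ B := le_trans (mul_nonneg (div_nonneg (by norm_num) H.c_pos.le) H.Λ_nonneg) hB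
  have hle : ∀ ω x, x ∈ Set.Ioc (0:ℝ) 1 → one1 ω x ≤ 1 := by
    intro ω x hx; simp only [one1, if_pos hx]; exact le_rfl
  obtain ⟨h, h1, h2, h3⟩ := fixed_limit' H hB (reg_one1 H.A_pos hB0) zero_le_one hle
  have hI : ∫⁻ z, ENNReal.ofReal (h z.1 z.2) ∂Leb = 1 := by
    have := h3 Set.univ MeasurableSet.univ (by simp)
    simp only [Measure.restrict_univ] at this
    rw [this]
    have : ∫⁻ z, ENNReal.ofReal (one1 z.1 z.2) ∂Leb = ∫⁻ z, 1 ∂Leb := by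
      refine lintegral_congr_ae ?_
      filter_upwards [Leb_ae_mem] with z hz
      simp only [one1, if_pos hz, ENNReal.ofReal_one]
    rw [this]; simp
  refine ⟨h, h1, h2, hI, fun ω x hx => ?_⟩
  by_contra hcon
  have h0 : h ω x = 0 := le_antisymm (not_lt.1 hcon) (h1.nonneg _ _)
  have hz := fun η p hp => zero_everywhere H h1.nonneg h2
    (h1.continuousOn H.A_pos H.A_lt hB0) hx h0 η (p := p) hp
  have : ∫⁻ z, ENNReal.ofReal (h z.1 z.2) ∂Leb = ∫⁻ z, 0 ∂Leb := by
    refine lintegral_congr_ae ?_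
    filter_upwards [Leb_ae_mem] with z hz'
    rw [hz _ _ hz']; simp
  rw [hI] at this
  simp at this

lemma cone_int {α c A Λ B M f h} (H : AlphaHyp α c A Λ) (hB : 4 / c * Λ ≤ B) (hf : Reg A B f)
    (hM0 : 0 ≤ M) (hle : ∀ ω x, x ∈ Set.Ioc (0:ℝ) 1 → f ω x ≤ M)
    (hh : Reg A B h) (Lh : Lop α h = h) (hI : ∫⁻ z, ENNReal.ofReal (h z.1 z.2) ∂Leb = 1)
    {E : Set (S1 × ℝ)} (hE : MeasurableSet E) (hTE : Tskew α ⁻¹' E = E) :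
    ∫⁻ z in E, ENNReal.ofReal (f z.1 z.2) ∂Leb =
      (∫⁻ z, ENNReal.ofReal (f z.1 z.2) ∂Leb) * ∫⁻ z in E, ENNReal.ofReal (h z.1 z.2) ∂Leb := by
  have hB0 : 0 ≤ B := le_trans (mul_nonneg (div_nonneg (by norm_num) H.c_pos.le) H.Λ_nonneg) hB
  obtain ⟨k, h1, h2, h3⟩ := fixed_limit' H hB hf hM0 hle
  have hfin : ∫⁻ z, ENNReal.ofReal (f z.1 z.2) ∂Leb ≠ ⊤ :=
    ne_top_of_le_ne_top ENNReal.ofReal_ne_top (lintegral_le_of_le hf hle)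
  have hu := h3 Set.univ MeasurableSet.univ (by simp)
  simp only [Measure.restrict_univ] at hu
  set r := (∫⁻ z, ENNReal.ofReal (f z.1 z.2) ∂Leb).toReal with hr
  have hr0 : 0 ≤ r := ENNReal.toReal_nonneg
  have hrI : ENNReal.ofReal r = ∫⁻ z, ENNReal.ofReal (f z.1 z.2) ∂Leb := ENNReal.ofReal_toReal hfin
  have hhm := hh.measurable H.A_pos H.A_lt hB0
  have e : k = fun ω x => r * h ω x := by
    refine fixed_unique H hB h1 (hh.smul hr0) h2 ?_ (by rwa [hu]) ?_
    · rw [Lop_smul α r h, Lh]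
    · simp_rw [ENNReal.ofReal_mul hr0]
      rw [lintegral_const_mul _ (by fun_prop), hI, mul_one, hu, hrI]
  rw [← h3 E hE hTE, e]
  simp_rw [ENNReal.ofReal_mul hr0]
  rw [lintegral_const_mul _ (by fun_prop), hrI]

/-- test functions in the cone -/
def tst (K : ℝ) (g : S1 × ℝ → ℝ) : S1 → ℝ → ℝ := fun ω x =>
  open Classical in if x ∈ Set.Ioc (0:ℝ) 1 then K * (3 - x) + g (ω, x) else 0

lemma dist_coe_le (s t : ℝ) : dist (s : S1) (t : S1) ≤ |s - t| := by
  rw [dist_eq_norm, ← AddCircle.coe_sub, ← Real.norm_eq_abs]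
  exact QuotientAddGroup.norm_mk_le_norm

lemma reg_tst {A B K : ℝ} {l : ℝ≥0} {g : S1 × ℝ → ℝ} (hA0 : 0 < A) (hB : 1 ≤ B) (hK : 0 < K)
    (hlK : (l : ℝ) ≤ K) (hg : LipschitzWith l g) (g0 : ∀ z, 0 ≤ g z) : Reg A B (tst K g) := by
  have hl0 : (0:ℝ) ≤ l := l.2
  have hdx : ∀ ω x y, |g (ω, x) - g (ω, y)| ≤ l * |x - y| := by
    intro ω x y
    have := hg.dist_le_mul (ω, x) (ω, y)
    rw [Prod.dist_eq, dist_self, max_eq_right dist_nonneg] at this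
    exact this
  have hdω : ∀ (s t x : ℝ), |g ((s : S1), x) - g ((t : S1), x)| ≤ l * |s - t| := by
    intro s t x
    have := hg.dist_le_mul ((s : S1), x) ((t : S1), x)
    rw [Prod.dist_eq, dist_self, max_eq_left dist_nonneg] at this
    refine le_trans this ?_
    exact mul_le_mul_of_nonneg_left (dist_coe_le s t) hl0
  constructor
  · intro ω x hx; simp only [tst, if_neg hx]
  · intro ω x
    unfold tst
    split_ifs with hx
    · have := g0 (ω, x)
      have : 0 ≤ K * (3 - x) := mul_nonneg hK.le (by linarith [hx.2])
      linarith
    · exact le_rfl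
  · intro ω x y h1 h2 h3
    have hx : x ∈ Set.Ioc (0:ℝ) 1 := ⟨h1, by linarith⟩
    have hy : y ∈ Set.Ioc (0:ℝ) 1 := ⟨by linarith, h3⟩
    simp only [tst, if_pos hx, if_pos hy]
    have := (abs_le.1 (hdx ω y x)).2
    rw [abs_of_nonneg (by linarith : 0 ≤ y - x)] at this
    nlinarith
  · intro ω x y h1 h2 h3
    have hx : x ∈ Set.Ioc (0:ℝ) 1 := ⟨h1, by linarith⟩
    have hy : y ∈ Set.Ioc (0:ℝ) 1 := ⟨by linarith, h3⟩
    simp only [tst, if_pos hx, if_pos hy]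
    have hgx := g0 (ω, x)
    have d := (abs_le.1 (hdx ω y x)).1
    rw [abs_of_nonneg (by linarith : 0 ≤ y - x)] at d
    have key : x * (K * (3 - x) + g (ω, x)) ≤ y * (K * (3 - y) + g (ω, y)) := by
      have e1 : 0 ≤ (y - x) * g (ω, x) := mul_nonneg (by linarith) hgx
      have e2 : y * (-(l * (y - x))) ≤ y * (g (ω, y) - g (ω, x)) :=
        mul_le_mul_of_nonneg_left d (by linarith)
      have e3 : y * (l * (y - x)) ≤ 1 * (K * (y - x)) :=
        mul_le_mul h3 (mul_le_mul_of_nonneg_right hlK (by linarith))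
          (mul_nonneg hl0 (by linarith)) (by norm_num)
      have e4 : 0 ≤ K * (y - x) * (2 - x - y) :=
        mul_nonneg (mul_nonneg hK.le (by linarith)) (by linarith)
      nlinarith
    rw [Real.rpow_add h1, Real.rpow_add (by linarith : 0 < y), Real.rpow_one, Real.rpow_one]
    have hp : x ^ A ≤ y ^ A := Real.rpow_le_rpow h1.le h2 hA0.le
    have hxA : 0 ≤ x ^ A := Real.rpow_nonneg h1.le _
    have hn : 0 ≤ x * (K * (3 - x) + g (ω, x)) := by
      have : 0 ≤ K * (3 - x) := mul_nonneg hK.le (by linarith)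
      positivity
    have := mul_le_mul hp key hn (by linarith)
    linarith
  · intro s t x
    unfold tst
    split_ifs with hx
    · have d := (abs_le.1 (hdω s t x)).2
      have gt := g0 ((t : S1), x)
      have hf : K ≤ K * (3 - x) + g ((t : S1), x) := by nlinarith [hx.2]
      have hst := abs_nonneg (s - t)
      have he : 1 + |s - t| ≤ exp (B * |s - t|) := by
        have := Real.add_one_le_exp (B * |s - t|)
        nlinarith
      have h1 : l * |s - t| ≤ K * |s - t| := mul_le_mul_of_nonneg_right hlK hst
      have h2 := mul_le_mul_of_nonneg_right he (by linarith : 0 ≤ K * (3 - x) + g ((t : S1), x))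
      nlinarith
    · simp

lemma inv_test {α c A Λ B h} (H : AlphaHyp α c A Λ) (hB : 4 / c * Λ ≤ B) (hB1 : 1 ≤ B)
    (hh : Reg A B h) (Lh : Lop α h = h) (hI : ∫⁻ z, ENNReal.ofReal (h z.1 z.2) ∂Leb = 1)
    {E : Set (S1 × ℝ)} (hE : MeasurableSet E) (hTE : Tskew α ⁻¹' E = E)
    {l : ℝ≥0} {g : S1 × ℝ → ℝ} (hg : LipschitzWith l g) (g0 : ∀ z, 0 ≤ g z) (g1 : ∀ z, g z ≤ 1) :
    ∫⁻ z in E, ENNReal.ofReal (g z) ∂Leb =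
      (∫⁻ z, ENNReal.ofReal (g z) ∂Leb) * ∫⁻ z in E, ENNReal.ofReal (h z.1 z.2) ∂Leb := by
  have hl0 : (0:ℝ) ≤ l := l.2
  set K : ℝ := l + 1 with hKdef
  have hK : 0 < K := by positivity
  have hr := reg_tst (A := A) H.A_pos hB1 hK (by linarith) hg g0
  have hr0 := reg_tst (A := A) H.A_pos hB1 hK (by linarith : (l:ℝ) ≤ K)
    (LipschitzWith.const' (0:ℝ) : LipschitzWith l (fun _ : S1 × ℝ => (0:ℝ))) (fun _ => le_rfl)
  have b1 : ∀ ω x, x ∈ Set.Ioc (0:ℝ) 1 → tst K g ω x ≤ 3 * K + 1 := by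
    intro ω x hx
    simp only [tst, if_pos hx]
    have := g1 (ω, x)
    nlinarith [hx.1]
  have b0 : ∀ ω x, x ∈ Set.Ioc (0:ℝ) 1 → tst K (fun _ => 0) ω x ≤ 3 * K + 1 := by
    intro ω x hx
    simp only [tst, if_pos hx]
    nlinarith [hx.1]
  have i1 := cone_int H hB hr (by positivity) b1 hh Lh hI hE hTE
  have i0 := cone_int H hB hr0 (by positivity) b0 hh Lh hI hE hTE
  have hsplit : ∀ᵐ z ∂Leb, ENNReal.ofReal (tst K g z.1 z.2) =
      ENNReal.ofReal (tst K (fun _ => 0) z.1 z.2) + ENNReal.ofReal (g z) := by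
    filter_upwards [Leb_ae_mem] with z hz
    simp only [tst, if_pos hz]
    rw [← ENNReal.ofReal_add _ (g0 z)]
    · simp
    · have : 0 ≤ K * (3 - z.2) := mul_nonneg hK.le (by linarith [hz.2])
      linarith
  have hgm : Measurable g := hg.continuous.measurable
  rw [lintegral_congr_ae hsplit, lintegral_congr_ae (ae_restrict_of_ae hsplit),
    lintegral_add_right _ (by fun_prop), lintegral_add_right _ (by fun_prop), add_mul, i0] at i1
  have hfin : (∫⁻ z, ENNReal.ofReal (tst K (fun _ => 0) z.1 z.2) ∂Leb) *
      ∫⁻ z in E, ENNReal.ofReal (h z.1 z.2) ∂Leb ≠ ⊤ := by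
    rw [← i0]
    exact ne_top_of_le_ne_top ENNReal.ofReal_ne_top
      ((setLIntegral_le_lintegral _ _).trans (lintegral_le_of_le hr0 b0))
  exact (ENNReal.add_right_inj hfin).1 i1

lemma inv_trivial {α c A Λ B h} (H : AlphaHyp α c A Λ) (hB : 4 / c * Λ ≤ B) (hB1 : 1 ≤ B)
    (hh : Reg A B h) (Lh : Lop α h = h) (hI : ∫⁻ z, ENNReal.ofReal (h z.1 z.2) ∂Leb = 1)
    {E : Set (S1 × ℝ)} (hE : MeasurableSet E) (hTE : Tskew α ⁻¹' E = E) :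
    Leb E = 0 ∨ Leb Eᶜ = 0 := by
  set q := ∫⁻ z in E, ENNReal.ofReal (h z.1 z.2) ∂Leb with hq
  have hq1 : q ≤ 1 := by rw [← hI]; exact setLIntegral_le_lintegral _ _
  have hclosed : ∀ F : Set (S1 × ℝ), IsClosed F → Leb.restrict E F = (q • Leb) F := by
    intro F hF
    have hpos : ∀ n : ℕ, (0:ℝ) < 1 / ((n:ℝ) + 1) := fun n => by positivity
    have hlim := tendsto_one_div_add_atTop_nhds_zero_nat (𝕜 := ℝ)
    have t1 := tendsto_lintegral_thickenedIndicator_of_isClosed (Leb.restrict E) hF hpos hlim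
    have t2 := tendsto_lintegral_thickenedIndicator_of_isClosed Leb hF hpos hlim
    have t3 := ENNReal.Tendsto.const_mul (a := q) t2 (Or.inr (ne_top_of_le_ne_top (by simp) hq1))
    have e : ∀ n : ℕ, ∫⁻ z in E, (thickenedIndicator (hpos n) F z : ℝ≥0∞) ∂Leb =
        q * ∫⁻ z, (thickenedIndicator (hpos n) F z : ℝ≥0∞) ∂Leb := by
      intro n
      have hlip := lipschitzWith_thickenedIndicator (hpos n) F
      have := inv_test H hB hB1 hh Lh hI hE hTE
        (g := fun z => ((thickenedIndicator (hpos n) F z : ℝ≥0) : ℝ))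
        (l := (1 / ((n:ℝ) + 1)).toNNReal⁻¹)
        (fun x y => by have := hlip x y; exact this)
        (fun z => NNReal.coe_nonneg _)
        (fun z => by exact_mod_cast thickenedIndicator_le_one (hpos n) F z)
      simp only [ENNReal.ofReal_coe_nnreal] at this
      rw [this, mul_comm]
    simp_rw [e] at t1
    exact tendsto_nhds_unique t1 t3
  have heq : Leb.restrict E = q • Leb := by
    have hqtop : q ≠ ⊤ := ne_top_of_le_ne_top (by simp) hq1
    have : IsFiniteMeasure (q • Leb) := by
      refine ⟨?_⟩
      rw [Measure.smul_apply, measure_univ, smul_eq_mul, mul_one]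
      exact hqtop.lt_top
    refine ext_of_generate_finite _ (BorelSpace.measurable_eq.trans borel_eq_generateFrom_isClosed)
      isPiSystem_isClosed (fun F hF => hclosed F hF) (hclosed _ isClosed_univ)
  have h1 := congrArg (fun μ => μ Eᶜ) heq
  have h2 := congrArg (fun μ => μ Set.univ) heq
  simp only [Measure.restrict_apply hE.compl, Measure.smul_apply, smul_eq_mul,
    Set.compl_inter_self, measure_empty, Measure.restrict_apply_univ, measure_univ, mul_one]
    at h1 h2
  rcases mul_eq_zero.1 h1.symm with h | h
  · left; rw [h2, h]
  · right; exact h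

lemma ergodic_of_ac {α c A Λ} (H : AlphaHyp α c A Λ) {m : Measure (S1 × ℝ)} (hm : m ≪ Leb)
    (hinv : m.map (Tskew α) = m) : Ergodic (Tskew α) m := by
  have hΛ : 0 ≤ 4 / c * Λ := mul_nonneg (div_nonneg (by norm_num) H.c_pos.le) H.Λ_nonneg
  obtain ⟨h, h1, h2, h3, h4⟩ := exists_h H (by linarith : 4 / c * Λ ≤ 4 / c * Λ + 1)
  refine { measurable := H.measurable_T, map_eq := hinv, aeconst_set := ?_ }
  intro E hE hTE
  rw [Filter.eventuallyConst_set']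
  rcases inv_trivial H (by linarith) (by linarith) h1 h2 h3 hE hTE with h | h
  · left; exact ae_eq_empty.2 (hm h)
  · right; exact ae_eq_univ.2 (hm h)

lemma main_thm {α c A Λ} (H : AlphaHyp α c A Λ) :
    (∃! m : Measure (S1 × ℝ),
      IsProbabilityMeasure m ∧ m ≪ Leb ∧ m.map (Tskew α) = m) ∧
    ∀ m : Measure (S1 × ℝ),
      IsProbabilityMeasure m → m ≪ Leb → m.map (Tskew α) = m →
        Ergodic (Tskew α) m ∧
        ∃ h : S1 × ℝ → ℝ,
          m = Leb.withDensity (fun z => ENNReal.ofReal (h z)) ∧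
          ∀ K : Set (S1 × ℝ), IsCompact K → K ⊆ Set.univ ×ˢ Set.Ioc (0:ℝ) 1 →
            ∃ L : ℝ≥0, LipschitzOnWith L h K := by
  have hΛ : 0 ≤ 4 / c * Λ := mul_nonneg (div_nonneg (by norm_num) H.c_pos.le) H.Λ_nonneg
  obtain ⟨h, h1, h2, h3, h4⟩ := exists_h H (le_refl (4 / c * Λ))
  have hmeas := h1.measurable H.A_pos H.A_lt hΛ
  set m0 := Leb.withDensity (fun z => ENNReal.ofReal (h z.1 z.2)) with hm0
  have p0 : IsProbabilityMeasure m0 := ⟨by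
    rw [hm0, withDensity_apply _ MeasurableSet.univ, Measure.restrict_univ, h3]⟩
  have ac0 : m0 ≪ Leb := withDensity_absolutelyContinuous _ _
  have inv0 : m0.map (Tskew α) = m0 := by
    ext E hE
    rw [Measure.map_apply H.measurable_T hE, hm0, withDensity_apply _ hE,
      withDensity_apply _ (H.measurable_T hE), map_withDensity H hΛ h1 hE, h2]
  have ca0 : Leb ≪ m0 := by
    refine withDensity_absolutelyContinuous' hmeas.ennreal_ofReal.aemeasurable ?_
    filter_upwards [Leb_ae_mem] with z hz
    simpa using h4 _ _ hz
  have erg0 := ergodic_of_ac H ac0 inv0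
  have uniq : ∀ m : Measure (S1 × ℝ), IsProbabilityMeasure m → m ≪ Leb →
      m.map (Tskew α) = m → m = m0 := by
    intro m hp hac hinv
    exact erg0.eq_of_absolutelyContinuous ⟨H.measurable_T, hinv⟩ (hac.trans ca0)
  refine ⟨⟨m0, ⟨p0, ac0, inv0⟩, fun m hm => uniq m hm.1 hm.2.1 hm.2.2⟩, ?_⟩
  intro m hp hac hinv
  refine ⟨ergodic_of_ac H hac hinv, fun z => h z.1 z.2, uniq m hp hac hinv, ?_⟩
  intro K hK hKs
  exact h1.lip_compact H.A_pos H.A_lt hΛ K hK hKs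

lemma exists_lip (αl : ℝ → ℝ) (h : ContDiff ℝ 2 αl) (hper : Function.Periodic αl 1) :
    ∃ Λ : ℝ, 0 ≤ Λ ∧ ∀ s t : ℝ, |αl s - αl t| ≤ Λ * |s - t| := by
  have hc : Continuous (deriv αl) := h.continuous_deriv (by norm_num)
  have hdiff : Differentiable ℝ αl := h.differentiable (by norm_num)
  have hp : Function.Periodic (deriv αl) 1 := by
    intro x
    have e : (fun t => αl (t + 1)) = αl := funext hper
    rw [← deriv_comp_add_const, e]
  obtain ⟨C, hC⟩ := (isCompact_Icc (a := (0:ℝ)) (b := 1)).exists_bound_of_continuousOn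
    hc.continuousOn
  have hC' : ∀ x, ‖deriv αl x‖ ≤ C := by
    intro x
    obtain ⟨y, hy, he⟩ := hp.exists_mem_Ico₀ (by norm_num) x
    rw [he]
    exact hC y ⟨hy.1, hy.2.le⟩
  refine ⟨C, (norm_nonneg _).trans (hC' 0), fun s t => ?_⟩
  exact Convex.norm_image_sub_le_of_norm_deriv_le (s := Set.univ)
    (fun x _ => hdiff x) (fun x _ => hC' x) convex_univ trivial trivial

lemma alphaHyp_of (α : S1 → ℝ) (αl : ℝ → ℝ)
    (hαl : ContDiff ℝ 2 αl) (hlift : ∀ t : ℝ, α (t : S1) = αl t) (αmin αmax : ℝ)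
    (hmin : ∀ ω, αmin ≤ α ω) (hmax : ∀ ω, α ω ≤ αmax) (h0 : 0 < αmin) (h1 : αmax < 1) :
    ∃ Λ, AlphaHyp α αmin αmax Λ := by
  obtain ⟨Λ, hΛ, hl⟩ := exists_lip αl hαl (by
    intro t
    rw [← hlift, ← hlift, AddCircle.coe_add, AddCircle.coe_period, add_zero])
  exact ⟨Λ, h0, hmin, hmax, h1, hΛ, fun s t => by rw [hlift, hlift]; exact hl s t⟩

/-- The skew product `T` admits a unique absolutely continuous invariant Borel probability
measure `m`; moreover `m` is ergodic and its density `h = dm/dLeb` has a version which is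
Lipschitz on every compact subset of `S¹ × (0,1]`. -/
theorem stmt0
    (α : S1 → ℝ) (αl : ℝ → ℝ)
    (hαl : ContDiff ℝ 2 αl) (hlift : ∀ t : ℝ, α (t : S1) = αl t)
    (x₀ : S1) (t₀ : ℝ) (ht₀ : (t₀ : S1) = x₀)
    (αmin αmax : ℝ)
    (hmin : ∀ ω, αmin ≤ α ω) (hx₀ : α x₀ = αmin)
    (huniq : ∀ ω, α ω = αmin → ω = x₀)
    (hmax : ∀ ω, α ω ≤ αmax) (hmax_att : ∃ ω, α ω = αmax)
    (h0 : 0 < αmin) (h01 : αmin < αmax) (h1 : αmax < 1) (h32 : αmax < 3 / 2 * αmin)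
    (h2nd : 0 < iteratedDeriv 2 αl t₀)
 :
    (∃! m : Measure (S1 × ℝ),
      IsProbabilityMeasure m ∧ m ≪ Leb ∧ m.map (Tskew α) = m) ∧
    ∀ m : Measure (S1 × ℝ),
      IsProbabilityMeasure m → m ≪ Leb → m.map (Tskew α) = m →
        Ergodic (Tskew α) m ∧
        ∃ h : S1 × ℝ → ℝ,
          m = Leb.withDensity (fun z => ENNReal.ofReal (h z)) ∧
          ∀ K : Set (S1 × ℝ), IsCompact K → K ⊆ Set.univ ×ˢ Set.Ioc (0:ℝ) 1 →
            ∃ L : ℝ≥0, LipschitzOnWith L h K := by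
  obtain ⟨Λ, H⟩ := alphaHyp_of α αl hαl hlift αmin αmax hmin hmax h0 h1
  exact main_thm H
end
end

section
/- For all integers m, m' ≥ 1 there exist C > 0 and δ ∈ (0,1) such that: for every N ∈ ℕ, all nondecreasing finite sequences of nonnegative integers k₁ ≤ … ≤ k_m and l₁ ≤ … ≤ l_{m'}, and all Lipschitz functions G₁, …, G_m, H₁, …, H_{m'} : S¹ → ℝ, one has |Cov(Π_{i=1}^{m} G_i ∘ F^{k_i}, Π_{j=1}^{m'} H_j ∘ F^{N+l_j})| ≤ C·(Π_{i=1}^{m} ‖G_i‖)·(Π_{j=1}^{m'} ‖H_j‖)·δ^{N − k_m}. -/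
open MeasureTheory Real Filter Topology
open scoped NNReal ENNReal

noncomputable section

/-- The Lipschitz norm of `g : S¹ → ℝ`: sup norm plus best Lipschitz constant. -/
noncomputable def lipNorm (g : S1 → ℝ) : ℝ :=
  (⨆ ω, |g ω|) + sInf {L : ℝ | 0 ≤ L ∧ LipschitzWith (Real.toNNReal L) g}

/-- Covariance of two integrable functions on `S¹` (with respect to Haar measure). -/
noncomputable def Cov (u v : S1 → ℝ) : ℝ :=
  (∫ ω : S1, u ω * v ω) - (∫ ω : S1, u ω) * (∫ ω : S1, v ω)

lemma aux_norm (a : ℝ) : ‖(a : S1)‖ ≤ |a| := by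
  simpa using QuotientAddGroup.norm_mk_le_norm (S := AddSubgroup.zmultiples (1:ℝ)) (m := a)

lemma aux_cont_integrable (u : S1 → ℝ) (hu : Continuous u) : Integrable u := by
  have := hu.continuousOn.integrableOn_compact (μ := (volume : Measure S1)) (K := Set.univ)
    isCompact_univ
  rwa [integrableOn_univ] at this

lemma aux_riemann (u : S1 → ℝ) (hu : Continuous u) (L : ℝ) (hL : 0 ≤ L)
    (h : ∀ x y, |u x - u y| ≤ L * dist x y) (M : ℕ) (hM : 0 < M) (ω : S1) :
    |(∑ j ∈ Finset.range M, u (ω + (((j : ℝ) / M : ℝ) : S1))) / M - ∫ x : S1, u x| ≤ L / M := by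
  have hM' : (0:ℝ) < M := by exact_mod_cast hM
  have hc : Continuous (fun t : ℝ => u (ω + (t : S1))) :=
    hu.comp (continuous_const.add (AddCircle.continuous_mk' 1))
  have e1 : ∫ x : S1, u x = ∑ j ∈ Finset.range M,
      ∫ t in ((j : ℝ) / M)..(((j + 1 : ℕ) : ℝ) / M), u (ω + (t : S1)) := by
    rw [intervalIntegral.sum_integral_adjacent_intervals (a := fun j : ℕ => (j : ℝ) / M)
      (fun k _ => hc.intervalIntegrable _ _)]
    rw [← integral_add_left_eq_self (μ := (volume : Measure S1)) u ω,
      ← UnitAddCircle.intervalIntegral_preimage 0]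
    simp [hM'.ne']
  rw [e1, Finset.sum_div, ← Finset.sum_sub_distrib]
  refine (Finset.abs_sum_le_sum_abs _ _).trans ?_
  have key : ∀ j ∈ Finset.range M, |u (ω + (((j : ℝ) / M : ℝ) : S1)) / M -
      ∫ t in ((j : ℝ) / M)..(((j + 1 : ℕ) : ℝ) / M), u (ω + (t : S1))| ≤ L / M * (1 / M) := by
    intro j _
    have hd : ((j + 1 : ℕ) : ℝ) / M - (j : ℝ) / M = 1 / M := by push_cast; ring
    have e2 : u (ω + (((j : ℝ) / M : ℝ) : S1)) / M -
      ∫ t in ((j : ℝ) / M)..(((j + 1 : ℕ) : ℝ) / M), u (ω + (t : S1)) =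
      ∫ t in ((j : ℝ) / M)..(((j + 1 : ℕ) : ℝ) / M),
        (u (ω + (((j : ℝ) / M : ℝ) : S1)) - u (ω + (t : S1))) := by
      rw [intervalIntegral.integral_sub (by simp) (hc.intervalIntegrable _ _),
        intervalIntegral.integral_const, hd, smul_eq_mul]
      ring
    rw [e2, ← Real.norm_eq_abs]
    have hle : (j : ℝ) / M ≤ ((j + 1 : ℕ) : ℝ) / M := by
      have : 0 < 1 / (M : ℝ) := by positivity
      linarith
    refine (intervalIntegral.norm_integral_le_of_norm_le_const (C := L / M) ?_).trans ?_
    · intro t ht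
      rw [Set.uIoc_of_le hle] at ht
      rw [Real.norm_eq_abs]
      refine (h _ _).trans ?_
      rw [dist_add_left, dist_eq_norm, div_eq_mul_one_div L]
      refine mul_le_mul_of_nonneg_left ?_ hL
      rw [← AddCircle.coe_sub]
      refine (aux_norm _).trans ?_
      rw [abs_le]
      constructor <;> linarith [ht.1, ht.2, show 0 < 1 / (M : ℝ) by positivity]
    · rw [hd, abs_of_pos (by positivity : 0 < 1 / (M : ℝ))]
  refine (Finset.sum_le_sum key).trans ?_
  rw [Finset.sum_const, Finset.card_range, nsmul_eq_mul]
  apply le_of_eq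
  field_simp

lemma aux_cov (u v : S1 → ℝ) (hu : Continuous u) (hv : Continuous v) (L B : ℝ) (hL : 0 ≤ L)
    (h : ∀ x y, |u x - u y| ≤ L * dist x y) (hB : ∀ x, |v x| ≤ B) (M : ℕ) (hM : 0 < M)
    (hper : ∀ (j : ℕ) (x : S1), v (x + (((j : ℝ) / M : ℝ) : S1)) = v x) :
    |Cov u v| ≤ L / M * B := by
  have hM' : (0:ℝ) < M := by exact_mod_cast hM
  have hcj : ∀ j : ℕ, Continuous (fun x : S1 => u (x + (((j : ℝ) / M : ℝ) : S1))) := fun j =>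
    hu.comp (continuous_id.add continuous_const)
  have e1 : ∀ j : ℕ, ∫ x : S1, u (x + (((j : ℝ) / M : ℝ) : S1)) * v x = ∫ x : S1, u x * v x := by
    intro j
    rw [← integral_add_right_eq_self (μ := (volume : Measure S1)) (fun x => u x * v x)
      (((j : ℝ) / M : ℝ) : S1)]
    simp only [hper]
  have hsc : Continuous (fun x : S1 =>
      (∑ j ∈ Finset.range M, u (x + (((j : ℝ) / M : ℝ) : S1))) / M) :=
    (continuous_finsetSum _ (fun j _ => hcj j)).div_const _
  have e2 : ∫ x : S1, (∑ j ∈ Finset.range M, u (x + (((j : ℝ) / M : ℝ) : S1))) / M * v x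
      = ∫ x : S1, u x * v x := by
    have : ∀ x : S1, (∑ j ∈ Finset.range M, u (x + (((j : ℝ) / M : ℝ) : S1))) / M * v x
      = (∑ j ∈ Finset.range M, u (x + (((j : ℝ) / M : ℝ) : S1)) * v x) * (1 / M) := by
      intro x
      rw [← Finset.sum_mul]; ring
    simp only [this]
    rw [integral_mul_const, integral_finsetSum _
      (fun (j : ℕ) _ => aux_cont_integrable (fun x => u (x + (((j : ℝ) / M : ℝ) : S1)) * v x)
        ((hcj j).mul hv))]
    simp only [e1]
    rw [Finset.sum_const, Finset.card_range, nsmul_eq_mul]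
    field_simp
  have e3 : Cov u v = ∫ x : S1, ((∑ j ∈ Finset.range M, u (x + (((j : ℝ) / M : ℝ) : S1))) / M
      - ∫ y : S1, u y) * v x := by
    simp only [sub_mul]
    rw [integral_sub (aux_cont_integrable (fun x => (∑ j ∈ Finset.range M,
        u (x + (((j : ℝ) / M : ℝ) : S1))) / M * v x) (hsc.mul hv))
      (aux_cont_integrable (fun x => (∫ y : S1, u y) * v x) (continuous_const.mul hv)), e2, integral_const_mul]
    rfl
  rw [e3, ← Real.norm_eq_abs]
  refine (norm_integral_le_of_norm_le_const (C := L / M * B) (Eventually.of_forall ?_)).trans ?_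
  · intro x
    rw [norm_mul, Real.norm_eq_abs, Real.norm_eq_abs]
    exact mul_le_mul (aux_riemann u hu L hL h M hM x) (hB x) (abs_nonneg _) (by positivity)
  · have h1 : (volume : Measure S1).real Set.univ = 1 := by
      rw [measureReal_def, UnitAddCircle.measure_univ]; rfl
    rw [h1, mul_one]

lemma aux_prod {ι : Type*} (s : Finset ι) (a b A : ι → ℝ) (D : ℝ) (hD : 0 ≤ D)
    (ha : ∀ i, |a i| ≤ A i) (hb : ∀ i, |b i| ≤ A i) (hab : ∀ i, |a i - b i| ≤ A i * D) :
    |∏ i ∈ s, a i - ∏ i ∈ s, b i| ≤ s.card * (∏ i ∈ s, A i) * D := by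
  classical
  have hA : ∀ i, 0 ≤ A i := fun i => (abs_nonneg _).trans (ha i)
  induction s using Finset.induction_on with
  | empty => simp
  | insert i s hi ih =>
    rw [Finset.prod_insert hi, Finset.prod_insert hi, Finset.prod_insert hi,
      Finset.card_insert_of_notMem hi]
    have e : a i * ∏ x ∈ s, a x - b i * ∏ x ∈ s, b x
      = (a i - b i) * ∏ x ∈ s, a x + b i * (∏ x ∈ s, a x - ∏ x ∈ s, b x) := by ring
    have hp : |∏ x ∈ s, a x| ≤ ∏ x ∈ s, A x := by
      rw [Finset.abs_prod]
      exact Finset.prod_le_prod (fun _ _ => abs_nonneg _) (fun x _ => ha x)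
    rw [e]
    refine (abs_add_le _ _).trans ?_
    rw [abs_mul, abs_mul]
    have h1 := mul_le_mul (hab i) hp (abs_nonneg _) (mul_nonneg (hA i) hD)
    have h2 := mul_le_mul (hb i) ih (abs_nonneg _) (hA i)
    push_cast
    linarith

lemma aux_abs_le (g : S1 → ℝ) (hg : ∃ K : ℝ≥0, LipschitzWith K g) (x : S1) :
    |g x| ≤ lipNorm g := by
  obtain ⟨K, hK⟩ := hg
  have hb : BddAbove (Set.range fun ω => |g ω|) :=
    (isCompact_range hK.continuous.abs).bddAbove
  have h1 := le_ciSup hb x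
  have h2 : 0 ≤ sInf {L : ℝ | 0 ≤ L ∧ LipschitzWith (Real.toNNReal L) g} :=
    Real.sInf_nonneg (fun L hL => hL.1)
  unfold lipNorm
  linarith

lemma aux_lip_le (g : S1 → ℝ) (hg : ∃ K : ℝ≥0, LipschitzWith K g) (x y : S1) :
    |g x - g y| ≤ lipNorm g * dist x y := by
  obtain ⟨K, hK⟩ := hg
  have h1 : 0 ≤ ⨆ ω, |g ω| := Real.iSup_nonneg (fun _ => abs_nonneg _)
  have h2 : |g x - g y| ≤ sInf {L : ℝ | 0 ≤ L ∧ LipschitzWith (Real.toNNReal L) g} * dist x y := by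
    rcases eq_or_lt_of_le (dist_nonneg (x := x) (y := y)) with h0 | h0
    · have : x = y := dist_eq_zero.1 h0.symm
      simp [this]
    · rw [← div_le_iff₀ h0]
      refine le_csInf ⟨K, K.2, by simpa using hK⟩ ?_
      rintro L ⟨hL0, hL⟩
      rw [div_le_iff₀ h0, ← Real.dist_eq]
      simpa [Real.coe_toNNReal _ hL0] using hL.dist_le_mul x y
  unfold lipNorm
  nlinarith [mul_nonneg h1 (dist_nonneg (x := x) (y := y))]

lemma aux_iter (n : ℕ) (x : S1) : Fm^[n] x = (4 ^ n : ℕ) • x := by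
  induction n generalizing x with
  | zero => simp
  | succ n ih => rw [Function.iterate_succ_apply, ih, Fm, smul_smul, pow_succ]

lemma aux_iter_dist (n : ℕ) (x y : S1) : dist (Fm^[n] x) (Fm^[n] y) ≤ 4 ^ n * dist x y := by
  rw [aux_iter, aux_iter, dist_eq_norm, dist_eq_norm, ← smul_sub]
  refine (norm_nsmul_le).trans ?_
  simp

lemma aux_iter_cont (n : ℕ) : Continuous (Fm^[n]) := by
  have : Fm^[n] = fun x => (4 ^ n : ℕ) • x := funext (aux_iter n)
  rw [this]
  exact continuous_const_smul _

lemma aux_iter_per (N l j : ℕ) (x : S1) :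
    Fm^[N + l] (x + (((j : ℝ) / (4 ^ N : ℕ) : ℝ) : S1)) = Fm^[N + l] x := by
  rw [aux_iter, aux_iter, smul_add, ← AddCircle.coe_nsmul]
  have : (4 ^ (N + l) : ℕ) • ((j : ℝ) / (4 ^ N : ℕ)) = ((4 ^ l * j : ℕ) : ℝ) := by
    rw [nsmul_eq_mul]; push_cast; rw [pow_add]; field_simp
  rw [this]
  have h0 : (((4 ^ l * j : ℕ) : ℝ) : S1) = 0 := by
    rw [AddCircle.coe_eq_zero_iff]
    exact ⟨(4 ^ l * j : ℕ), by simp⟩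
  rw [h0, add_zero]

/-- Multiple decorrelation estimate for `F(ω) = 4ω`: for sequences of length `m+1 ≥ 1` and
`m'+1 ≥ 1` of Lipschitz functions, the covariance of the products decays exponentially in
`N - k_m`. -/
theorem stmt18 (m m' : ℕ) :
    ∃ C : ℝ, 0 < C ∧ ∃ δ : ℝ, δ ∈ Set.Ioo (0:ℝ) 1 ∧
      ∀ N : ℕ, ∀ k : Fin (m + 1) → ℕ, ∀ l : Fin (m' + 1) → ℕ, Monotone k → Monotone l →
      ∀ G : Fin (m + 1) → S1 → ℝ, ∀ H : Fin (m' + 1) → S1 → ℝ,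
      (∀ i, ∃ Li : ℝ≥0, LipschitzWith Li (G i)) →
      (∀ j, ∃ Lj : ℝ≥0, LipschitzWith Lj (H j)) →
      |Cov (fun ω => ∏ i, G i (Fm^[k i] ω)) (fun ω => ∏ j, H j (Fm^[N + l j] ω))| ≤
        C * (∏ i, lipNorm (G i)) * (∏ j, lipNorm (H j)) *
          δ ^ ((N : ℤ) - (k (Fin.last m) : ℤ)) := by
  refine ⟨m + 1, by positivity, 1 / 4, ⟨by norm_num, by norm_num⟩, ?_⟩
  intro N k l hk _ G H hG hH
  have hGc : ∀ i, Continuous (G i) := fun i => (hG i).choose_spec.continuous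
  have hHc : ∀ i, Continuous (H i) := fun i => (hH i).choose_spec.continuous
  have hGn : ∀ i, 0 ≤ lipNorm (G i) := fun i => (abs_nonneg _).trans (aux_abs_le _ (hG i) 0)
  have hP : 0 ≤ ∏ i, lipNorm (G i) := Finset.prod_nonneg (fun i _ => hGn i)
  have main := aux_cov (fun ω => ∏ i, G i (Fm^[k i] ω)) (fun ω => ∏ j, H j (Fm^[N + l j] ω))
    (continuous_finsetProd _ fun i _ => (hGc i).comp (aux_iter_cont _))
    (continuous_finsetProd _ fun i _ => (hHc i).comp (aux_iter_cont _))
    ((m + 1) * (∏ i, lipNorm (G i)) * 4 ^ (k (Fin.last m))) (∏ j, lipNorm (H j))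
    (by positivity)
    (by
      intro x y
      have := aux_prod Finset.univ (fun i => G i (Fm^[k i] x)) (fun i => G i (Fm^[k i] y))
        (fun i => lipNorm (G i)) (4 ^ (k (Fin.last m)) * dist x y) (by positivity)
        (fun i => aux_abs_le _ (hG i) _) (fun i => aux_abs_le _ (hG i) _)
        (fun i => by
          refine (aux_lip_le _ (hG i) _ _).trans (mul_le_mul_of_nonneg_left ?_ (hGn i))
          refine (aux_iter_dist _ _ _).trans (mul_le_mul_of_nonneg_right ?_ dist_nonneg)
          exact pow_le_pow_right₀ (by norm_num) (hk (Fin.le_last i)))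
      simp only [Finset.card_univ, Fintype.card_fin] at this
      push_cast at this
      linarith)
    (by
      intro x
      rw [Finset.abs_prod]
      exact Finset.prod_le_prod (fun _ _ => abs_nonneg _) (fun j _ => aux_abs_le _ (hH j) _))
    (4 ^ N) (by positivity)
    (by
      intro j x
      simp only [aux_iter_per])
  refine main.trans (le_of_eq ?_)
  rw [zpow_sub₀ (by norm_num), zpow_natCast, zpow_natCast]
  push_cast
  rw [one_div, inv_pow, inv_pow]
  field_simp
end
end
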